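/- There exists a constant ε₀ = ε₀(n, λ, V₀) > 0 such that if the smallness condition holds with parameter ε₀, then for every ancient solution u of ∂ₜu = Lu on ℝ⁻ × Ω vanishing on ℝ⁻ × ∂Ω satisfying ∫_{Q_R} u² ≤ C R^{2d} for all R > 1 (for some constants C > 0 and d > 0), u is identically zero. -/

import Mathlib

/-!
The proof is a weighted energy estimate for a truncation of `u`; it shows `u ≤ 0`, and the same
for `-u` gives `u = 0`.

*Energy.* For `δ > 0` let `Tf δ` be the `C¹` convex truncation equal to `(s - δ)² / s` for `s ≥ δ`
and to `0` for `s ≤ δ`. Since `u` is continuous up to the boundary and vanishes there, `Tf δ ∘ u`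
vanishes near the boundary of the strip, so that no boundary regularity is needed in order to
integrate by parts. With the cutoff `ρ = (1 - x₀²/R²)₊` put `E(t) = ∫ Tf δ (u)² ρ^{2k+2}`.

*Poincaré.* On each slice `{x₀} × Ω₀` a `C¹` function `f` vanishing outside `Ω₀` satisfies
`∫ f² ≤ CP ∫ |∇f|²` with `CP` depending only on `n` and the volume (`poincare_slice`). If the
smallness parameter is at most a multiple of `1 / CP`, the terms with `b` and `c` are absorbed, and
testing the equation gives `E' ≤ -2μ E + A ∫ Tf δ (u)² ρ^{2k} + O(δ²)` with `μ = λ / (4 CP)`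
and `A` of order `R⁻²`. By Young's inequality (`young_rho`) `A ρ^{2k} ≤ μ ρ^{2k+2} + A (A/μ)^k`:
the weight error is of order `R^{-2(k+1)}` (`slice_energy`).

*Differentiating in time.* The time derivative of `u` is only assumed to exist pointwise, so
dominated convergence needs a local bound on difference quotients. A barrier argument
(`forward_bound`) bounds the forward quotients on compact subsets of the strip, where the
superlevel sets of `u` lie; hence `E` has the expected right derivative
(`energy_hasDerivWithinAt`), which suffices for a Grönwall argument.

*Conclusion.* Multiplying by `e^{μt} - e^{-μR²}`, which vanishes at `t = -R²`, yields
`(e^{μt} - e^{-μR²}) E(t) ≤ (μ e^{-μR²} + A (A/μ)^k) ∫_{Q_R} u² + O(δ²)` (`energy_bound`). With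
`∫_{Q_R} u² ≤ C R^{2d}` and `k + 1 > d` the right-hand side tends to zero as `R → ∞` with `δ` chosen
small depending on `R`, whereas `E(t)` stays bounded below if `u(t, ·)` is positive somewhere.
-/

open MeasureTheory Set Filter

noncomputable section

/-- Partial derivative of `f` in the `i`-th coordinate direction. -/
def pd {n : ℕ} (i : Fin (n + 1)) (f : (Fin (n + 1) → ℝ) → ℝ) (x : Fin (n + 1) → ℝ) : ℝ :=
  fderiv ℝ f x (Pi.single i 1)

/-- The divergence-form operator `L u = ∂ᵢ(aᶦʲ ∂ⱼ u) + bⁱ ∂ᵢ u + c u`. -/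
def Lop {n : ℕ} (a : (Fin (n + 1) → ℝ) → Fin (n + 1) → Fin (n + 1) → ℝ)
    (b : (Fin (n + 1) → ℝ) → Fin (n + 1) → ℝ) (c : (Fin (n + 1) → ℝ) → ℝ)
    (f : (Fin (n + 1) → ℝ) → ℝ) (x : Fin (n + 1) → ℝ) : ℝ :=
  (∑ i, pd i (fun y => ∑ j, a y i j * pd j f y) x) + (∑ i, b x i * pd i f x) + c x * f x

/-- The infinite strip `Ω = ℝ × Ω₀ ⊆ ℝ^{n+1}` (first coordinate `x₀` unconstrained). -/
def strip {n : ℕ} (Ω₀ : Set (Fin n → ℝ)) : Set (Fin (n + 1) → ℝ) :=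
  {x | (fun i : Fin n => x i.succ) ∈ Ω₀}

/-- `D_r = (-r, r) × Ω₀`. -/
def Dset {n : ℕ} (Ω₀ : Set (Fin n → ℝ)) (r : ℝ) : Set (Fin (n + 1) → ℝ) :=
  {x | x 0 ∈ Ioo (-r) r ∧ (fun i : Fin n => x i.succ) ∈ Ω₀}

/-- `Q_r = (-r², 0] × D_r`. -/
def Qset {n : ℕ} (Ω₀ : Set (Fin n → ℝ)) (r : ℝ) : Set (ℝ × (Fin (n + 1) → ℝ)) :=
  Ioc (-r ^ 2) 0 ×ˢ Dset Ω₀ r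

/-- Ellipticity, boundedness and regularity of the coefficients of `L`. -/
structure GoodCoeffs {n : ℕ} (Ω₀ : Set (Fin n → ℝ)) (lam Lam : ℝ)
    (a : (Fin (n + 1) → ℝ) → Fin (n + 1) → Fin (n + 1) → ℝ)
    (b : (Fin (n + 1) → ℝ) → Fin (n + 1) → ℝ) (c : (Fin (n + 1) → ℝ) → ℝ) : Prop where
  elliptic : ∀ x ∈ strip Ω₀, ∀ ξ : Fin (n + 1) → ℝ,
    lam * ∑ i, ξ i ^ 2 ≤ ∑ i, ∑ j, a x i j * ξ i * ξ j
  a_bdd : ∀ x ∈ strip Ω₀, ∀ i j, |a x i j| ≤ Lam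
  a_reg : ∀ i j, ContDiffOn ℝ 1 (fun x => a x i j) (strip Ω₀)
  b_bdd : ∃ M, ∀ x ∈ strip Ω₀, ∀ i, |b x i| ≤ M
  c_bdd : ∃ M, ∀ x ∈ strip Ω₀, |c x| ≤ M

/-- The smallness condition with parameter `ε`: `|bⁱ| ≤ √ε` and `c ≤ ε` on `Ω`. -/
def Smallness {n : ℕ} (Ω₀ : Set (Fin n → ℝ))
    (b : (Fin (n + 1) → ℝ) → Fin (n + 1) → ℝ) (c : (Fin (n + 1) → ℝ) → ℝ) (ε : ℝ) : Prop :=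
  ∀ x ∈ strip Ω₀, (∀ i, |b x i| ≤ Real.sqrt ε) ∧ c x ≤ ε

/-- Ancient solution of `∂ₜ u = L u` on `ℝ⁻ × Ω` vanishing on `ℝ⁻ × ∂Ω`:
continuous up to the boundary, `C²` in space, differentiable in time, solving the equation. -/
structure IsAncientSolution {n : ℕ} (Ω₀ : Set (Fin n → ℝ))
    (a : (Fin (n + 1) → ℝ) → Fin (n + 1) → Fin (n + 1) → ℝ)
    (b : (Fin (n + 1) → ℝ) → Fin (n + 1) → ℝ) (c : (Fin (n + 1) → ℝ) → ℝ)
    (u : ℝ → (Fin (n + 1) → ℝ) → ℝ) : Prop where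
  cont : ContinuousOn (fun p : ℝ × (Fin (n + 1) → ℝ) => u p.1 p.2)
    (Iic (0 : ℝ) ×ˢ closure (strip Ω₀))
  space_reg : ∀ t ≤ (0 : ℝ), ContDiffOn ℝ 2 (u t) (strip Ω₀)
  pde : ∀ t ≤ (0 : ℝ), ∀ x ∈ strip Ω₀,
    HasDerivWithinAt (fun s => u s x) (Lop a b c (u t) x) (Iic (0 : ℝ)) t
  bdry : ∀ t ≤ (0 : ℝ), ∀ x ∈ frontier (strip Ω₀), u t x = 0

/-- Membership in `E_d`: an ancient solution with exponential growth of order `d`. -/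
def MemEd {n : ℕ} (Ω₀ : Set (Fin n → ℝ))
    (a : (Fin (n + 1) → ℝ) → Fin (n + 1) → Fin (n + 1) → ℝ)
    (b : (Fin (n + 1) → ℝ) → Fin (n + 1) → ℝ) (c : (Fin (n + 1) → ℝ) → ℝ)
    (d : ℝ) (u : ℝ → (Fin (n + 1) → ℝ) → ℝ) : Prop :=
  IsAncientSolution Ω₀ a b c u ∧
  ∃ C > (0 : ℝ), ∀ t ≤ (0 : ℝ), ∀ x ∈ strip Ω₀,
    |u t x| ≤ C * Real.exp (d * (Real.sqrt (∑ i, x i ^ 2) + Real.sqrt |t|))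

/-! ### Pointwise calculus and the elliptic second-derivative test -/

/-- The principal part `∂ᵢ(aᶦʲ ∂ⱼ f)` of the operator. -/
def L0 {n : ℕ} (a : (Fin (n + 1) → ℝ) → Fin (n + 1) → Fin (n + 1) → ℝ)
    (f : (Fin (n + 1) → ℝ) → ℝ) (x : Fin (n + 1) → ℝ) : ℝ :=
  ∑ i, pd i (fun y => ∑ j, a y i j * pd j f y) x

lemma strip_isOpen {n : ℕ} {Ω₀ : Set (Fin n → ℝ)} (h : IsOpen Ω₀) : IsOpen (strip Ω₀) :=
  h.preimage (f := fun x : Fin (n + 1) → ℝ => fun i : Fin n => x i.succ) (by fun_prop)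

lemma pd_contDiffOn {n : ℕ} {Ω : Set (Fin (n + 1) → ℝ)} (hΩ : IsOpen Ω)
    {f : (Fin (n + 1) → ℝ) → ℝ} {k m : WithTop ℕ∞} (hf : ContDiffOn ℝ k f Ω) (hk : m + 1 ≤ k)
    (i : Fin (n + 1)) : ContDiffOn ℝ m (pd i f) Ω :=
  (hf.fderiv_of_isOpen hΩ hk).clm_apply contDiffOn_const

lemma flux_contDiffOn {n : ℕ} {Ω : Set (Fin (n + 1) → ℝ)} (hΩ : IsOpen Ω)
    {a : (Fin (n + 1) → ℝ) → Fin (n + 1) → Fin (n + 1) → ℝ}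
    (ha : ∀ i j, ContDiffOn ℝ 1 (fun x => a x i j) Ω)
    {f : (Fin (n + 1) → ℝ) → ℝ} (hf : ContDiffOn ℝ 2 f Ω) (i : Fin (n + 1)) :
    ContDiffOn ℝ 1 (fun y => ∑ j, a y i j * pd j f y) Ω :=
  ContDiffOn.sum fun j _ => (ha i j).mul (pd_contDiffOn hΩ hf (by norm_num) j)

lemma L0_continuousOn {n : ℕ} {Ω : Set (Fin (n + 1) → ℝ)} (hΩ : IsOpen Ω)
    {a : (Fin (n + 1) → ℝ) → Fin (n + 1) → Fin (n + 1) → ℝ}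
    (ha : ∀ i j, ContDiffOn ℝ 1 (fun x => a x i j) Ω)
    {f : (Fin (n + 1) → ℝ) → ℝ} (hf : ContDiffOn ℝ 2 f Ω) : ContinuousOn (L0 a f) Ω :=
  continuousOn_finsetSum _ fun i _ =>
    (pd_contDiffOn (m := 0) hΩ (flux_contDiffOn hΩ ha hf i) (by norm_num) i).continuousOn

lemma pd_sub {n : ℕ} {f g : (Fin (n + 1) → ℝ) → ℝ} {x : Fin (n + 1) → ℝ} (i : Fin (n + 1))
    (hf : DifferentiableAt ℝ f x) (hg : DifferentiableAt ℝ g x) :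
    pd i (fun y => f y - g y) x = pd i f x - pd i g x := by
  unfold pd
  rw [fderiv_fun_sub hf hg]; rfl

lemma L0_sub {n : ℕ} {Ω : Set (Fin (n + 1) → ℝ)} (hΩ : IsOpen Ω)
    {a : (Fin (n + 1) → ℝ) → Fin (n + 1) → Fin (n + 1) → ℝ}
    (ha : ∀ i j, ContDiffOn ℝ 1 (fun x => a x i j) Ω)
    {f g : (Fin (n + 1) → ℝ) → ℝ} (hf : ContDiffOn ℝ 2 f Ω) (hg : ContDiffOn ℝ 2 g Ω)
    {x : Fin (n + 1) → ℝ} (hx : x ∈ Ω) :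
    L0 a (fun y => f y - g y) x = L0 a f x - L0 a g x := by
  have dO : ∀ {h : (Fin (n + 1) → ℝ) → ℝ} {k : WithTop ℕ∞}, ContDiffOn ℝ k h Ω → k ≠ 0 →
      ∀ y ∈ Ω, DifferentiableAt ℝ h y := fun hh hk y hy =>
    (hh.contDiffAt (hΩ.mem_nhds hy)).differentiableAt hk
  unfold L0
  rw [← Finset.sum_sub_distrib]
  refine Finset.sum_congr rfl fun i _ => ?_
  rw [← pd_sub i (dO (flux_contDiffOn hΩ ha hf i) (by norm_num) x hx)
    (dO (flux_contDiffOn hΩ ha hg i) (by norm_num) x hx)]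
  have : (fun y => ∑ j, a y i j * pd j (fun y => f y - g y) y) =ᶠ[nhds x]
      (fun y => (∑ j, a y i j * pd j f y) - ∑ j, a y i j * pd j g y) := by
    filter_upwards [hΩ.mem_nhds hx] with y hy
    rw [← Finset.sum_sub_distrib]
    refine Finset.sum_congr rfl fun j _ => ?_
    rw [pd_sub j (dO hf (by norm_num) y hy) (dO hg (by norm_num) y hy)]
    ring
  unfold pd at this ⊢
  rw [this.fderiv_eq]

lemma pd_neg {n : ℕ} (f : (Fin (n + 1) → ℝ) → ℝ) (x : Fin (n + 1) → ℝ) (i : Fin (n + 1)) :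
    pd i (fun y => - f y) x = - pd i f x := by
  unfold pd
  rw [fderiv_fun_neg]; rfl

lemma Lop_neg {n : ℕ} (a : (Fin (n + 1) → ℝ) → Fin (n + 1) → Fin (n + 1) → ℝ)
    (b : (Fin (n + 1) → ℝ) → Fin (n + 1) → ℝ) (c : (Fin (n + 1) → ℝ) → ℝ)
    (f : (Fin (n + 1) → ℝ) → ℝ) (x : Fin (n + 1) → ℝ) :
    Lop a b c (fun y => - f y) x = - Lop a b c f x := by
  unfold Lop
  simp only [pd_neg, mul_neg, Finset.sum_neg_distrib]
  ring

lemma IsAncientSolution.neg {n : ℕ} {Ω₀ : Set (Fin n → ℝ)}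
    {a : (Fin (n + 1) → ℝ) → Fin (n + 1) → Fin (n + 1) → ℝ}
    {b : (Fin (n + 1) → ℝ) → Fin (n + 1) → ℝ} {c : (Fin (n + 1) → ℝ) → ℝ}
    {u : ℝ → (Fin (n + 1) → ℝ) → ℝ} (h : IsAncientSolution Ω₀ a b c u) :
    IsAncientSolution Ω₀ a b c (fun t x => - u t x) where
  cont := h.cont.neg
  space_reg t ht := (h.space_reg t ht).neg
  pde t ht x hx := by
    rw [Lop_neg]
    exact (h.pde t ht x hx).neg
  bdry t ht x hx := by rw [h.bdry t ht x hx, neg_zero]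

open scoped MatrixOrder in
/-- The trace pairing of an elliptic matrix with a symmetric positive semidefinite one is
nonnegative: factor `H = Bᵀ B` and apply ellipticity to the rows of `B`. -/
lemma trace_pairing_nonneg {m : ℕ} (A H : Fin m → Fin m → ℝ)
    (hA : ∀ ξ : Fin m → ℝ, 0 ≤ ∑ i, ∑ j, A i j * ξ i * ξ j)
    (hsymm : ∀ i j, H i j = H j i)
    (hH : ∀ ξ : Fin m → ℝ, 0 ≤ ∑ i, ∑ j, H i j * ξ i * ξ j) :
    0 ≤ ∑ i, ∑ j, A i j * H i j := by
  have hP : (Matrix.of H).PosSemidef := by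
    refine .of_dotProduct_mulVec_nonneg ?_ fun ξ => ?_
    · ext i j
      simp [hsymm i j]
    · have := hH ξ
      simp only [dotProduct, Matrix.mulVec, Finset.mul_sum, star_trivial, Matrix.of_apply]
      refine this.trans_eq (Finset.sum_congr rfl fun i _ => Finset.sum_congr rfl fun j _ => ?_)
      ring
  obtain ⟨B, hB⟩ := CStarAlgebra.nonneg_iff_eq_star_mul_self.mp hP.nonneg
  have hHB : ∀ i j, H i j = ∑ k, B k i * B k j := fun i j => by
    have := congrFun (congrFun hB i) j
    simpa [Matrix.mul_apply, Matrix.star_eq_conjTranspose] using this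
  have : ∑ i, ∑ j, A i j * H i j = ∑ k, ∑ i, ∑ j, A i j * B k i * B k j := by
    simp only [hHB, Finset.mul_sum]
    rw [Finset.sum_comm (γ := Fin m) (α := Fin m)]
    refine Eq.symm ?_
    rw [Finset.sum_comm]
    rw [Finset.sum_comm (f := fun j i => ∑ k, A i j * (B k i * B k j))]
    refine Finset.sum_congr rfl fun i _ => ?_
    rw [Finset.sum_comm]
    simp only [mul_assoc]
  rw [this]
  exact Finset.sum_nonneg fun k _ => hA (B k)

lemma deriv_deriv_nonneg_of_isLocalMin {f : ℝ → ℝ} {x : ℝ} (h : IsLocalMin f x)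
    (hc : ContinuousAt f x) : 0 ≤ deriv (deriv f) x := by
  by_contra! hneg
  have hmax := isLocalMax_of_deriv_deriv_neg hneg h.deriv_eq_zero hc
  have hconst : f =ᶠ[nhds x] fun _ => f x := by
    filter_upwards [h, hmax] with y h1 h2
    exact le_antisymm h2 h1
  have h1 : deriv f =ᶠ[nhds x] fun _ => 0 := by
    simpa using hconst.deriv
  rw [h1.deriv_eq] at hneg
  simp at hneg

/-- At an interior local minimum of a `C²` function the divergence-form principal part is
nonnegative: the gradient vanishes, so only the trace of `a` against the Hessian remains. -/
lemma L0_nonneg_of_isLocalMin {n : ℕ} {Ω : Set (Fin (n + 1) → ℝ)} (hΩ : IsOpen Ω)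
    {a : (Fin (n + 1) → ℝ) → Fin (n + 1) → Fin (n + 1) → ℝ}
    (ha : ∀ i j, ContDiffOn ℝ 1 (fun x => a x i j) Ω)
    {z : (Fin (n + 1) → ℝ) → ℝ} (hz : ContDiffOn ℝ 2 z Ω)
    {x : Fin (n + 1) → ℝ} (hx : x ∈ Ω) (hmin : IsLocalMin z x)
    (hell : ∀ ξ : Fin (n + 1) → ℝ, 0 ≤ ∑ i, ∑ j, a x i j * ξ i * ξ j) :
    0 ≤ L0 a z x := by
  have hzx : ContDiffAt ℝ 2 z x := hz.contDiffAt (hΩ.mem_nhds hx)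
  have hfd : DifferentiableAt ℝ (fderiv ℝ z) x :=
    (hzx.fderiv_right (m := 1) (by norm_num)).differentiableAt (by norm_num)
  set D2 := fderiv ℝ (fderiv ℝ z) x with hD2
  have hpd : ∀ i j, pd i (pd j z) x = D2 (Pi.single i 1) (Pi.single j 1) := fun i j => by
    unfold pd
    have := (hfd.hasFDerivAt.clm_apply (hasFDerivAt_const (Pi.single j (1:ℝ)) x)).fderiv
    rw [this]; simp [hD2]
  have hgrad : ∀ j, pd j z x = 0 := fun j => by
    unfold pd; rw [hmin.fderiv_eq_zero]; rfl
  have hL : L0 a z x = ∑ i, ∑ j, a x i j * D2 (Pi.single i 1) (Pi.single j 1) := by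
    unfold L0
    refine Finset.sum_congr rfl fun i _ => ?_
    have h1 : HasFDerivAt (fun y => ∑ j, a y i j * pd j z y)
        (∑ j, (a x i j • fderiv ℝ (pd j z) x + pd j z x • fderiv ℝ (fun y => a y i j) x)) x := by
      refine HasFDerivAt.fun_sum fun j _ => HasFDerivAt.mul ?_ ?_
      · exact (((ha i j).contDiffAt (hΩ.mem_nhds hx)).differentiableAt (by norm_num)).hasFDerivAt
      · exact (((pd_contDiffOn (m := 1) hΩ hz (by norm_num) j).contDiffAt
          (hΩ.mem_nhds hx)).differentiableAt (by norm_num)).hasFDerivAt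
    rw [show pd i (fun y => ∑ j, a y i j * pd j z y) x = _ from
      congrArg (fun T => T (Pi.single i 1)) h1.fderiv]
    simp only [_root_.sum_apply, _root_.add_apply,
      _root_.smul_apply, smul_eq_mul, hgrad, zero_mul, add_zero]
    exact Finset.sum_congr rfl fun j _ => by rw [← hpd]; rfl
  rw [hL]
  refine trace_pairing_nonneg (fun i j => a x i j) _ hell (fun i j => ?_) fun ξ => ?_
  · exact (hzx.isSymmSndFDerivAt (by simp)).eq _ _
  · -- restrict to the line `s ↦ x + s ξ`
    have hξ : ξ = ∑ i, ξ i • (Pi.single i (1:ℝ) : Fin (n + 1) → ℝ) := by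
      ext k; simp [Finset.sum_apply, Pi.single_apply]
    have hquad : D2 ξ ξ = ∑ i, ∑ j,
        D2 (Pi.single i 1) (Pi.single j 1) * ξ i * ξ j := by
      conv_lhs => rw [hξ]
      simp only [map_sum, map_smul, _root_.sum_apply,
        _root_.smul_apply, smul_eq_mul, Finset.mul_sum]
      rw [Finset.sum_comm]
      refine Finset.sum_congr rfl fun i _ => Finset.sum_congr rfl fun j _ => ?_
      ring
    rw [← hquad]
    let l : ℝ → (Fin (n + 1) → ℝ) := fun s => x + s • ξ
    have hl0 : l 0 = x := by simp [l]
    have hl : ∀ s, HasDerivAt l ξ s := fun s => by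
      have := ((hasDerivAt_id s).smul_const ξ).const_add x
      simpa only [one_smul, id] using this
    have hlc : ContinuousAt l 0 := (hl 0).continuousAt
    have hlmin : IsLocalMin (z ∘ l) 0 := by
      have : Tendsto l (nhds 0) (nhds x) := by simpa [hl0] using hlc.tendsto
      have h2 := this.eventually hmin
      simpa [IsLocalMin, IsMinFilter, hl0] using h2
    have hd1 : deriv (z ∘ l) =ᶠ[nhds 0] fun s => fderiv ℝ z (l s) ξ := by
      have : ∀ᶠ s in nhds (0:ℝ), l s ∈ Ω := hlc.eventually (by rw [hl0]; exact hΩ.mem_nhds hx)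
      filter_upwards [this] with s hs
      exact ((((hz.contDiffAt (hΩ.mem_nhds hs)).differentiableAt
        (by norm_num)).hasFDerivAt).comp_hasDerivAt s (hl s)).deriv
    have hd2 : HasDerivAt (fun s => fderiv ℝ z (l s) ξ) (D2 ξ ξ) 0 := by
      have h1 : HasFDerivAt (fderiv ℝ z) D2 (l 0) := by rw [hl0]; exact hfd.hasFDerivAt
      have h2 := h1.comp_hasDerivAt (0:ℝ) (hl 0)
      simpa using h2.clm_apply (hasDerivAt_const (0:ℝ) ξ)
    have := deriv_deriv_nonneg_of_isLocalMin hlmin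
      (ContinuousAt.comp (by rw [hl0]; exact hzx.continuousAt) hlc)
    rwa [hd1.deriv_eq, hd2.deriv] at this

/-! ### Forward difference quotients in time -/

open scoped Manifold ContDiff in
lemma exists_cutoff {n : ℕ} {K K' : Set (Fin (n + 1) → ℝ)} (hK : IsClosed K)
    (h : K ⊆ interior K') :
    ∃ f : (Fin (n + 1) → ℝ) → ℝ, ContDiff ℝ 2 f ∧ (∀ x ∈ K, f x = 1) ∧
      (∀ x ∉ interior K', f x = 0) ∧ ∀ x, f x ∈ Icc (0:ℝ) 1 := by
  obtain ⟨f, h1, h2, h3⟩ := exists_contMDiffMap_one_nhds_of_subset_interior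
    (n := 2) 𝓘(ℝ, Fin (n + 1) → ℝ) (s := K) (t := interior K') hK (by rwa [interior_interior])
  exact ⟨f, f.contMDiff.contDiff, fun x hx => h1.self_of_nhdsSet x hx, h2, h3⟩

/-- Time regularity from the maximum principle: on a compact subset of the strip the *forward*
increments of a solution are `O(t - t₀)`, uniformly in space. The barrier is
`N (t - t₀) + 2U (1 - f) + u(t₀, ·)` with `f` a smooth cutoff equal to `1` on the compact set. -/
lemma forward_bound {n : ℕ} {Ω₀ : Set (Fin n → ℝ)} (hΩ₀ : IsOpen Ω₀) {lam Lam : ℝ}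
    (hlam : 0 < lam)
    {a : (Fin (n + 1) → ℝ) → Fin (n + 1) → Fin (n + 1) → ℝ}
    {b : (Fin (n + 1) → ℝ) → Fin (n + 1) → ℝ} {c : (Fin (n + 1) → ℝ) → ℝ}
    (hG : GoodCoeffs Ω₀ lam Lam a b c)
    {u : ℝ → (Fin (n + 1) → ℝ) → ℝ} (hu : IsAncientSolution Ω₀ a b c u)
    {t₀ : ℝ} (ht₀ : t₀ ≤ 0) {K : Set (Fin (n + 1) → ℝ)} (hK : IsCompact K)
    (hKΩ : K ⊆ strip Ω₀) :
    ∃ M, ∀ t ∈ Icc t₀ 0, ∀ x ∈ K, u t x - u t₀ x ≤ M * (t - t₀) := by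
  have hΩ := strip_isOpen hΩ₀
  obtain ⟨K', hK'c, hKK', hK'Ω⟩ := exists_compact_between hK hΩ hKΩ
  obtain ⟨f, hf, hf1, hf0, hf01⟩ := exists_cutoff hK.isClosed hKK'
  have hcont : ContinuousOn (fun p : ℝ × (Fin (n + 1) → ℝ) => u p.1 p.2) (Icc t₀ 0 ×ˢ K') :=
    hu.cont.mono (prod_mono Icc_subset_Iic_self (hK'Ω.trans subset_closure))
  obtain ⟨U, hU⟩ := (isCompact_Icc.prod hK'c).exists_bound_of_continuousOn hcont
  set ψ : (Fin (n + 1) → ℝ) → ℝ := fun x => 2 * U * (1 - f x) + u t₀ x with hψ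
  have hψC : ContDiffOn ℝ 2 ψ (strip Ω₀) :=
    (((contDiff_const (c := (1:ℝ))).sub hf).contDiffOn.const_smul (2 * U)).add
      (hu.space_reg t₀ ht₀)
  obtain ⟨B1, hB1⟩ := hK'c.exists_bound_of_continuousOn
    ((L0_continuousOn hΩ hG.a_reg hψC).mono hK'Ω)
  obtain ⟨B2, hB2⟩ := hK'c.exists_bound_of_continuousOn (f := fun x => ∑ i, |pd i ψ x|)
    ((continuousOn_finsetSum _ fun i _ =>
      (pd_contDiffOn (m := 0) hΩ hψC (by norm_num) i).continuousOn.abs).mono hK'Ω)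
  obtain ⟨Mb, hMb⟩ := hG.b_bdd
  obtain ⟨Mc, hMc⟩ := hG.c_bdd
  set N := B1 + Mb * B2 + Mc * U + 1 with hN
  refine ⟨N, fun t ht x hx => ?_⟩
  have hxK' : x ∈ K' := interior_subset (hKK' hx)
  set z : ℝ × (Fin (n + 1) → ℝ) → ℝ := fun p => N * (p.1 - t₀) + ψ p.2 - u p.1 p.2 with hz
  have hzc : ContinuousOn z (Icc t₀ 0 ×ˢ K') := by
    refine ContinuousOn.sub (ContinuousOn.add (by fun_prop) ?_) hcont
    exact (hψC.continuousOn.mono hK'Ω).comp continuousOn_snd fun p hp => hp.2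
  obtain ⟨⟨s, y⟩, ⟨hs, hy⟩, hmin⟩ := (isCompact_Icc.prod hK'c).exists_isMinOn
    ⟨(t, x), ht, hxK'⟩ hzc
  simp only at hs hy
  suffices h0 : 0 ≤ z (s, y) by
    have h1 : z (s, y) ≤ z (t, x) := hmin ⟨ht, hxK'⟩
    have h2 : z (t, x) = N * (t - t₀) + u t₀ x - u t x := by
      simp only [hz, hψ, hf1 x hx]; ring
    linarith
  have hUs := abs_le.1 (hU (s, y) ⟨hs, hy⟩)
  have hU0 := abs_le.1 (hU (t₀, y) ⟨⟨le_rfl, ht₀⟩, hy⟩)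
  simp only at hUs hU0
  have hUnn : 0 ≤ U := (norm_nonneg _).trans (hU (s, y) ⟨hs, hy⟩)
  have hyΩ : y ∈ strip Ω₀ := hK'Ω hy
  have hB1y := abs_le.1 (hB1 y hy)
  have hB2y := abs_le.1 (hB2 y hy)
  have hB2nn : 0 ≤ B2 := (norm_nonneg _).trans (hB2 y hy)
  have hB1nn : 0 ≤ B1 := (norm_nonneg _).trans (hB1 y hy)
  have hMbnn : 0 ≤ Mb := (abs_nonneg _).trans (hMb y hyΩ 0)
  have hMcnn : 0 ≤ Mc := (abs_nonneg _).trans (hMc y hyΩ)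
  have hNpos : 0 < N := by positivity
  rcases hs.1.eq_or_lt with hst | hst
  · simp only [hz, hψ, ← hst]
    have := (hf01 y).2
    nlinarith
  by_cases hyint : y ∈ interior K'
  swap
  · simp only [hz, hψ, hf0 y hyint]
    nlinarith [mul_nonneg hNpos.le (sub_nonneg.2 hst.le)]
  -- interior minimum at a positive time: contradiction
  exfalso
  have hlmin : IsLocalMin (fun x' => ψ x' - u s x') y := by
    filter_upwards [mem_interior_iff_mem_nhds.1 hyint] with x' hx'
    have : z (s, y) ≤ z (s, x') := hmin ⟨hs, hx'⟩
    simp only [hz] at this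
    linarith
  have husC := hu.space_reg s hs.2
  have hL0 := L0_nonneg_of_isLocalMin hΩ hG.a_reg (hψC.sub husC) hyΩ hlmin fun ξ =>
    le_trans (mul_nonneg hlam.le (Finset.sum_nonneg fun i _ => sq_nonneg _))
      (hG.elliptic y hyΩ ξ)
  rw [L0_sub hΩ hG.a_reg hψC husC hyΩ] at hL0
  have hgrad : ∀ i, pd i (u s) y = pd i ψ y := fun i => by
    have h1 : pd i (fun x' => ψ x' - u s x') y = 0 := by
      unfold pd; rw [hlmin.fderiv_eq_zero]; rfl
    rw [pd_sub i ((hψC.contDiffAt (hΩ.mem_nhds hyΩ)).differentiableAt (by norm_num))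
      ((husC.contDiffAt (hΩ.mem_nhds hyΩ)).differentiableAt (by norm_num))] at h1
    linarith
  -- the time derivative of `z` at the minimum is nonpositive
  have hder : N - Lop a b c (u s) y ≤ 0 := by
    have h1 : HasDerivWithinAt (fun r => z (r, y)) (N - Lop a b c (u s) y) (Iio s) s := by
      have h2 := (hu.pde s hs.2 y hyΩ).mono (Iio_subset_Iic hs.2)
      have h3 : HasDerivWithinAt (fun r => N * (r - t₀) + ψ y) N (Iio s) s := by
        simpa using ((((hasDerivAt_id s).sub_const t₀).const_mul N).add_const
          (ψ y)).hasDerivWithinAt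
      exact h3.sub h2
    rw [hasDerivWithinAt_iff_tendsto_slope' (by simp)] at h1
    refine le_of_tendsto h1 ?_
    filter_upwards [Ioo_mem_nhdsLT hst] with r hr
    have h4 : z (s, y) ≤ z (r, y) := hmin ⟨⟨hr.1.le, hr.2.le.trans hs.2⟩, hy⟩
    rw [slope_def_field]
    exact div_nonpos_of_nonneg_of_nonpos (by linarith) (by linarith [hr.2])
  have hbsum : ∑ i, b y i * pd i (u s) y ≤ Mb * B2 := by
    calc ∑ i, b y i * pd i (u s) y ≤ ∑ i, Mb * |pd i ψ y| := by
          refine Finset.sum_le_sum fun i _ => ?_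
          rw [hgrad]
          refine (le_abs_self _).trans ?_
          rw [abs_mul]
          exact mul_le_mul_of_nonneg_right (hMb y hyΩ i) (abs_nonneg _)
      _ = Mb * ∑ i, |pd i ψ y| := by rw [Finset.mul_sum]
      _ ≤ Mb * B2 := mul_le_mul_of_nonneg_left hB2y.2 hMbnn
  have hcu : c y * u s y ≤ Mc * U := by
    refine (le_abs_self _).trans ?_
    rw [abs_mul]
    exact mul_le_mul (hMc y hyΩ) (abs_le.2 hUs) (abs_nonneg _) hMcnn
  have hLop : Lop a b c (u s) y = L0 a (u s) y + (∑ i, b y i * pd i (u s) y) + c y * u s y := rfl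
  linarith [hB1y.2]

lemma forward_bound_abs {n : ℕ} {Ω₀ : Set (Fin n → ℝ)} (hΩ₀ : IsOpen Ω₀) {lam Lam : ℝ}
    (hlam : 0 < lam)
    {a : (Fin (n + 1) → ℝ) → Fin (n + 1) → Fin (n + 1) → ℝ}
    {b : (Fin (n + 1) → ℝ) → Fin (n + 1) → ℝ} {c : (Fin (n + 1) → ℝ) → ℝ}
    (hG : GoodCoeffs Ω₀ lam Lam a b c)
    {u : ℝ → (Fin (n + 1) → ℝ) → ℝ} (hu : IsAncientSolution Ω₀ a b c u)
    {t₀ : ℝ} (ht₀ : t₀ ≤ 0) {K : Set (Fin (n + 1) → ℝ)} (hK : IsCompact K)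
    (hKΩ : K ⊆ strip Ω₀) :
    ∃ M, 0 ≤ M ∧ ∀ t ∈ Icc t₀ 0, ∀ x ∈ K, |u t x - u t₀ x| ≤ M * (t - t₀) := by
  obtain ⟨M1, h1⟩ := forward_bound hΩ₀ hlam hG hu ht₀ hK hKΩ
  obtain ⟨M2, h2⟩ := forward_bound hΩ₀ hlam hG hu.neg ht₀ hK hKΩ
  refine ⟨max 0 (max M1 M2), le_max_left _ _, fun t ht x hx => abs_le.2 ⟨?_, ?_⟩⟩
  · have := h2 t ht x hx
    have h3 : M2 * (t - t₀) ≤ max 0 (max M1 M2) * (t - t₀) :=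
      mul_le_mul_of_nonneg_right (by simp) (sub_nonneg.2 ht.1)
    linarith
  · exact (h1 t ht x hx).trans (mul_le_mul_of_nonneg_right (by simp) (sub_nonneg.2 ht.1))

/-! ### Truncation and cutoff profiles -/

lemma hasDerivAt_comp_max {F F' : ℝ → ℝ} {δ : ℝ} (hF : ∀ m, δ ≤ m → HasDerivAt F (F' m) m)
    (h0 : F' δ = 0) (s : ℝ) : HasDerivAt (fun s => F (max s δ)) (F' (max s δ)) s := by
  rcases lt_trichotomy s δ with hs | hs | hs
  · have : (fun s => F (max s δ)) =ᶠ[nhds s] fun _ => F δ := by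
      filter_upwards [gt_mem_nhds hs] with r hr
      rw [max_eq_right hr.le]
    rw [max_eq_right hs.le, h0]
    exact (hasDerivAt_const s (F δ)).congr_of_eventuallyEq this
  · subst hs
    rw [max_self, h0]
    have h1 := hF s le_rfl
    rw [h0, hasDerivAt_iff_isLittleO] at h1
    rw [hasDerivAt_iff_isLittleO]
    simp only [smul_zero, sub_zero, max_self] at h1 ⊢
    have hc : Tendsto (fun r => max r s) (nhds s) (nhds s) := by
      have : Continuous fun r : ℝ => max r s := by fun_prop
      simpa using this.tendsto s
    refine (h1.comp_tendsto hc).trans_isBigO ?_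
    refine Asymptotics.IsBigO.of_bound 1 (Eventually.of_forall fun r => ?_)
    simp only [Function.comp, Real.norm_eq_abs, one_mul]
    rcases le_total r s with h | h
    · simp [max_eq_right h]
    · simp [max_eq_left h]
  · have : (fun s => F (max s δ)) =ᶠ[nhds s] F := by
      filter_upwards [lt_mem_nhds hs] with r hr
      rw [max_eq_left hr.le]
    rw [max_eq_left hs.le]
    exact (hF s hs.le).congr_of_eventuallyEq this

/-- A convex `C¹` truncation: `Tf δ s = (s - δ)² / s` for `s ≥ δ` and `0` for `s ≤ δ`. -/
def Tf (δ s : ℝ) : ℝ := max s δ - 2 * δ + δ ^ 2 / max s δ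

/-- The derivative of `Tf δ`. -/
def tauf (δ s : ℝ) : ℝ := 1 - δ ^ 2 / (max s δ) ^ 2

/-- The derivative of `Tf δ * tauf δ`. -/
def gpf (δ s : ℝ) : ℝ := tauf δ s ^ 2 + Tf δ s * (2 * δ ^ 2 / (max s δ) ^ 3)


lemma Tf_hasDerivAt {δ : ℝ} (hδ : 0 < δ) (s : ℝ) : HasDerivAt (Tf δ) (tauf δ s) s := by
  refine hasDerivAt_comp_max (F := fun m => m - 2 * δ + δ ^ 2 / m)
    (F' := fun m => 1 - δ ^ 2 / m ^ 2) (fun m hm => ?_) ?_ s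
  · have hm0 : m ≠ 0 := by linarith
    have h2 := ((hasDerivAt_id m).sub_const (2 * δ)).fun_add
      ((hasDerivAt_const m (δ ^ 2)).fun_div (hasDerivAt_id m) hm0)
    refine h2.congr_deriv ?_
    simp; ring
  · simp [hδ.ne']

lemma Ttau_hasDerivAt {δ : ℝ} (hδ : 0 < δ) (s : ℝ) :
    HasDerivAt (fun s => Tf δ s * tauf δ s) (gpf δ s) s := by
  refine hasDerivAt_comp_max (F := fun m => (m - 2 * δ + δ ^ 2 / m) * (1 - δ ^ 2 / m ^ 2))
    (F' := fun m => (1 - δ ^ 2 / m ^ 2) ^ 2 + (m - 2 * δ + δ ^ 2 / m) * (2 * δ ^ 2 / m ^ 3))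
    (fun m hm => ?_) ?_ s
  · have hm0 : m ≠ 0 := by linarith
    have h1 := ((hasDerivAt_id m).sub_const (2 * δ)).fun_add
      ((hasDerivAt_const m (δ ^ 2)).fun_div (hasDerivAt_id m) hm0)
    have h2 := ((hasDerivAt_const m (δ ^ 2)).fun_div (hasDerivAt_pow 2 m)
      (pow_ne_zero 2 hm0)).const_sub 1
    refine (h1.fun_mul h2).congr_deriv ?_
    simp
    field_simp
    ring
  · have : δ - 2 * δ + δ ^ 2 / δ = 0 := by field_simp; ring
    simp [hδ.ne', this]

lemma tauf_continuous {δ : ℝ} (hδ : 0 < δ) : Continuous (tauf δ) := by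
  unfold tauf
  refine continuous_const.sub (continuous_const.div (by fun_prop) fun s => ?_)
  have : 0 < max s δ := lt_max_of_lt_right hδ
  positivity

lemma Tf_continuous {δ : ℝ} (hδ : 0 < δ) : Continuous (Tf δ) :=
  continuous_iff_continuousAt.2 fun s => (Tf_hasDerivAt hδ s).continuousAt

lemma gpf_continuous {δ : ℝ} (hδ : 0 < δ) : Continuous (gpf δ) := by
  refine ((tauf_continuous hδ).pow 2).add ((Tf_continuous hδ).mul
    (continuous_const.div (by fun_prop) fun s => ?_))
  have : 0 < max s δ := lt_max_of_lt_right hδ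
  positivity

lemma Tf_eq_zero {δ : ℝ} (_hδ : 0 < δ) {s : ℝ} (h : s ≤ δ) : Tf δ s = 0 := by
  unfold Tf; rw [max_eq_right h]; field_simp; ring

lemma tauf_eq_zero {δ : ℝ} (hδ : 0 < δ) {s : ℝ} (h : s ≤ δ) : tauf δ s = 0 := by
  unfold tauf; rw [max_eq_right h]; field_simp; ring

lemma Tf_eq_div {δ : ℝ} (hδ : 0 < δ) (s : ℝ) : Tf δ s = (max s δ - δ) ^ 2 / max s δ := by
  have : 0 < max s δ := lt_max_of_lt_right hδ
  unfold Tf; field_simp; ring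

lemma Tf_nonneg {δ : ℝ} (hδ : 0 < δ) (s : ℝ) : 0 ≤ Tf δ s := by
  have : 0 < max s δ := lt_max_of_lt_right hδ
  rw [Tf_eq_div hδ]; positivity

lemma tauf_nonneg {δ : ℝ} (hδ : 0 < δ) (s : ℝ) : 0 ≤ tauf δ s := by
  have h1 : 0 < max s δ := lt_max_of_lt_right hδ
  unfold tauf
  rw [sub_nonneg, div_le_one (by positivity)]
  exact pow_le_pow_left₀ hδ.le (le_max_right _ _) 2

lemma tauf_le_one {δ : ℝ} (s : ℝ) : tauf δ s ≤ 1 := by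
  unfold tauf
  have : 0 ≤ δ ^ 2 / (max s δ) ^ 2 := by positivity
  linarith

lemma tauf_sq_le_gpf {δ : ℝ} (hδ : 0 < δ) (s : ℝ) : tauf δ s ^ 2 ≤ gpf δ s := by
  have h1 : 0 < max s δ := lt_max_of_lt_right hδ
  have := Tf_nonneg hδ s
  unfold gpf
  have : 0 ≤ Tf δ s * (2 * δ ^ 2 / (max s δ) ^ 3) := by positivity
  linarith

lemma Tf_ge {δ : ℝ} (hδ : 0 < δ) (s : ℝ) : s - 2 * δ ≤ Tf δ s := by
  have h1 : 0 < max s δ := lt_max_of_lt_right hδ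
  have h2 : 0 ≤ δ ^ 2 / max s δ := by positivity
  have := le_max_left s δ
  unfold Tf; linarith

lemma Tf_le_abs {δ : ℝ} (hδ : 0 < δ) (s : ℝ) : Tf δ s ≤ |s| := by
  rcases le_total s δ with h | h
  · rw [Tf_eq_zero hδ h]; exact abs_nonneg _
  · have hs : 0 < s := hδ.trans_le h
    rw [abs_of_pos hs, Tf_eq_div hδ, max_eq_left h, div_le_iff₀ hs]
    nlinarith

lemma Tf_sq_le {δ : ℝ} (hδ : 0 < δ) (s : ℝ) : Tf δ s ^ 2 ≤ s ^ 2 := by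
  rw [← sq_abs s]
  exact pow_le_pow_left₀ (Tf_nonneg hδ s) (Tf_le_abs hδ s) 2

lemma self_mul_Ttau_nonneg {δ : ℝ} (hδ : 0 < δ) (s : ℝ) : 0 ≤ Tf δ s * tauf δ s * s := by
  rcases le_total s δ with h | h
  · simp [Tf_eq_zero hδ h]
  · have hs : 0 < s := hδ.trans_le h
    have := Tf_nonneg hδ s
    have := tauf_nonneg hδ s
    positivity

lemma self_mul_Ttau_le {δ : ℝ} (hδ : 0 < δ) (s : ℝ) :
    Tf δ s * tauf δ s * s ≤ 2 * Tf δ s ^ 2 + δ ^ 2 := by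
  rcases le_total s δ with h | h
  · simp [Tf_eq_zero hδ h]; positivity
  · have hs : 0 < s := hδ.trans_le h
    have h1 : tauf δ s * s ≤ Tf δ s + 2 * δ := by
      unfold tauf Tf
      rw [max_eq_left h]
      have : 0 ≤ δ ^ 2 / s := by positivity
      have h3 : (1 - δ ^ 2 / s ^ 2) * s = s - δ ^ 2 / s := by field_simp
      rw [h3]; linarith
    nlinarith [mul_le_mul_of_nonneg_left h1 (Tf_nonneg hδ s), sq_nonneg (Tf δ s - δ)]

lemma Tf_lipschitz {δ : ℝ} (hδ : 0 < δ) (r s : ℝ) : |Tf δ r - Tf δ s| ≤ |r - s| := by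
  have := Convex.norm_image_sub_le_of_norm_hasDerivWithin_le (f := Tf δ) (f' := tauf δ) (C := 1)
    (s := univ) (x := s) (y := r) (fun x _ => (Tf_hasDerivAt hδ x).hasDerivWithinAt)
    (fun x _ => by
      rw [Real.norm_eq_abs, abs_of_nonneg (tauf_nonneg hδ x)]; exact tauf_le_one x)
    convex_univ (mem_univ _) (mem_univ _)
  simpa using this


/-- The spatial cutoff profile `(1 - s²/R²)₊`. -/
def rho (R s : ℝ) : ℝ := max (1 - s ^ 2 / R ^ 2) 0

/-- The derivative of `rho R ^ (2 * k + 2)`. -/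
def dw (k : ℕ) (R s : ℝ) : ℝ := (2 * k + 2) * rho R s ^ (2 * k + 1) * (-(2 * s / R ^ 2))

lemma rho_nonneg (R s : ℝ) : 0 ≤ rho R s := le_max_right _ _

lemma rho_le_one (R s : ℝ) : rho R s ≤ 1 := max_le (by have : 0 ≤ s ^ 2 / R ^ 2 := by positivity
                                                       linarith) zero_le_one

lemma rho_continuous (R : ℝ) : Continuous (rho R) := by unfold rho; fun_prop

lemma dw_continuous (k : ℕ) (R : ℝ) : Continuous (dw k R) := by
  unfold dw
  have := rho_continuous R
  fun_prop

lemma rho_eq_zero {R s : ℝ} (hR : 0 < R) (h : R ≤ |s|) : rho R s = 0 := by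
  unfold rho
  apply max_eq_right
  rw [sub_nonpos, one_le_div (by positivity), ← sq_abs s]
  exact pow_le_pow_left₀ hR.le h 2

lemma w_hasDerivAt (k : ℕ) (R s : ℝ) :
    HasDerivAt (fun s => rho R s ^ (2 * k + 2)) (dw k R s) s := by
  have h1 := hasDerivAt_comp_max (F := fun m => m ^ (2 * k + 2))
    (F' := fun m => (2 * k + 2) * m ^ (2 * k + 1)) (δ := 0)
    (fun m _ => by simpa using hasDerivAt_pow (2 * k + 2) m) (by simp) (1 - s ^ 2 / R ^ 2)
  have h2 : HasDerivAt (fun s : ℝ => 1 - s ^ 2 / R ^ 2) (-(2 * s / R ^ 2)) s := by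
    simpa using ((hasDerivAt_pow 2 s).div_const (R ^ 2)).const_sub 1
  exact h1.comp s h2

lemma abs_dw_le {k : ℕ} {R s : ℝ} (hR : 0 < R) :
    |dw k R s| ≤ (4 * (k + 1) / R) * rho R s ^ (2 * k + 1) := by
  rcases le_total R |s| with h | h
  · unfold dw; rw [rho_eq_zero hR h]; simp
  · unfold dw
    have h1 := rho_nonneg R s
    rw [abs_mul, abs_mul, abs_neg, abs_of_nonneg (a := (2 * (k:ℝ) + 2)) (by positivity),
      abs_of_nonneg (a := rho R s ^ _) (by positivity), abs_div, abs_mul,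
      abs_of_pos (a := (2:ℝ)) (by norm_num), abs_of_nonneg (a := R ^ 2) (by positivity)]
    have h2 : 2 * |s| / R ^ 2 ≤ 2 / R := by
      rw [div_le_div_iff₀ (by positivity) hR]
      nlinarith
    calc (2 * (k:ℝ) + 2) * rho R s ^ (2 * k + 1) * (2 * |s| / R ^ 2)
        ≤ (2 * (k:ℝ) + 2) * rho R s ^ (2 * k + 1) * (2 / R) := by gcongr
      _ = _ := by ring

/-- Young's inequality for the cutoff: the lower power `ρ^{2k}` is absorbed by `ρ^{2k+2}`
up to an error of order `A^{k+1}`. -/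
lemma young_rho {A μ : ℝ} (hA : 0 < A) (hμ : 0 < μ) (k : ℕ) {r : ℝ} (hr : 0 ≤ r) :
    A * r ^ (2 * k) ≤ μ * r ^ (2 * k + 2) + A * (A / μ) ^ k := by
  rcases le_total (A / μ) (r ^ 2) with h | h
  · have h1 : A ≤ μ * r ^ 2 := by rwa [div_le_iff₀' hμ] at h
    have h2 : A * r ^ (2 * k) ≤ μ * r ^ 2 * r ^ (2 * k) := by gcongr
    have h3 : 0 ≤ A * (A / μ) ^ k := by positivity
    calc A * r ^ (2 * k) ≤ μ * r ^ 2 * r ^ (2 * k) := h2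
      _ = μ * r ^ (2 * k + 2) := by ring
      _ ≤ _ := by linarith
  · have h1 : r ^ (2 * k) ≤ (A / μ) ^ k := by rw [pow_mul]; gcongr
    have h2 : A * r ^ (2 * k) ≤ A * (A / μ) ^ k := by gcongr
    have h3 : 0 ≤ μ * r ^ (2 * k + 2) := by positivity
    linarith

/-! ### A Poincaré inequality whose constant depends only on the volume -/

/-- The `L¹` Poincaré inequality on sets of given volume: for `n ≥ 2` it is the
Gagliardo–Nirenberg–Sobolev inequality followed by Hölder's, and for `n = 1` the fundamental
theorem of calculus. -/
lemma poincare_L1 (n : ℕ) (hn : 1 ≤ n) (V : ENNReal) (hV : V ≠ ⊤) :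
    ∃ C : NNReal, ∀ s : Set (Fin n → ℝ), IsOpen s → volume s = V →
      ∀ g : (Fin n → ℝ) → ℝ, ContDiff ℝ 1 g → HasCompactSupport g → (∀ y ∉ s, g y = 0) →
      ∫⁻ y, ‖g y‖ₑ ≤ C * ∫⁻ y, ‖fderiv ℝ g y‖ₑ := by
  rcases hn.eq_or_lt with rfl | hn2
  · refine ⟨V.toNNReal, fun s hs hsV g hg hgc hgs => ?_⟩
    have hpt : ∀ y, ‖g y‖ₑ ≤ ∫⁻ y, ‖fderiv ℝ g y‖ₑ := fun y => by
      let l : ℝ → (Fin 1 → ℝ) := fun r => fun _ => r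
      have hl : ∀ r, HasDerivAt l (fun _ => 1) r := fun r =>
        hasDerivAt_pi.2 fun _ => hasDerivAt_id r
      have hlc : ContDiff ℝ 1 l := contDiff_pi.2 fun _ => contDiff_id
      have hemb : Topology.IsClosedEmbedding l :=
        (Homeomorph.funUnique (Fin 1) ℝ).symm.isClosedEmbedding
      have h1 := HasCompactSupport.enorm_le_lintegral_Ici_deriv (hg.comp hlc)
        (hgc.comp_isClosedEmbedding hemb) (y 0)
      have hy : l (y 0) = y := by ext i; fin_cases i; rfl
      simp only [Function.comp, hy] at h1
      refine h1.trans ((setLIntegral_le_lintegral _ _).trans ?_)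
      have h2 := (volume_preserving_funUnique (Fin 1) ℝ).symm.lintegral_comp_emb
        (MeasurableEquiv.measurableEmbedding _) (fun y => ‖fderiv ℝ g y‖ₑ)
      have h2' : ∫⁻ r, ‖fderiv ℝ g (l r)‖ₑ = ∫⁻ y, ‖fderiv ℝ g y‖ₑ := by
        convert h2
        rfl
      rw [← h2']
      refine lintegral_mono fun r => ?_
      have h3 : deriv (g ∘ l) r = fderiv ℝ g (l r) (fun _ => 1) :=
        ((((hg.differentiable (by norm_num)) (l r)).hasFDerivAt).comp_hasDerivAt r (hl r)).deriv
      rw [h3]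
      refine (ContinuousLinearMap.le_opENorm _ _).trans ?_
      have : ‖(fun _ : Fin 1 => (1:ℝ))‖ₑ = 1 := by simp [enorm_eq_nnnorm, Pi.nnnorm_def]
      rw [this, mul_one]
    rw [ENNReal.coe_toNNReal hV, ← hsV, mul_comm, ← setLIntegral_const]
    rw [← setLIntegral_eq_of_support_subset (s := s)]
    · exact lintegral_mono fun y => hpt y
    · intro y hy
      by_contra h
      simp [hgs y h] at hy
  · set p : NNReal := NNReal.conjExponent n with hp
    have hconj : NNReal.HolderConjugate (n : NNReal) p :=
      NNReal.HolderConjugate.conjExponent (by exact_mod_cast hn2)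
    have hp1 : 1 ≤ p := hconj.symm.lt.le
    have hVr : V ^ (1 / (1:ENNReal).toReal - 1 / (p:ENNReal).toReal) ≠ ⊤ := by
      refine ENNReal.rpow_ne_top_of_nonneg ?_ hV
      simp only [ENNReal.toReal_one, ENNReal.coe_toReal, sub_nonneg]
      gcongr
      exact_mod_cast hp1
    refine ⟨eLpNormLESNormFDerivOneConst (volume : Measure (Fin n → ℝ)) p *
      (V ^ (1 / (1:ENNReal).toReal - 1 / (p:ENNReal).toReal)).toNNReal,
      fun s hs hsV g hg hgc hgs => ?_⟩
    have h1 := eLpNorm_le_eLpNorm_fderiv_one (volume : Measure (Fin n → ℝ)) hg hgc (p := p)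
      (by simpa using hconj)
    have h2 := eLpNorm_le_eLpNorm_mul_rpow_measure_univ (μ := volume.restrict s) (f := g)
      (p := 1) (q := p) (by exact_mod_cast hp1) hg.continuous.aestronglyMeasurable
    rw [Measure.restrict_apply_univ, hsV, eLpNorm_one_eq_lintegral_enorm,
      setLIntegral_eq_of_support_subset] at h2
    · rw [eLpNorm_one_eq_lintegral_enorm] at h1
      rw [ENNReal.coe_mul, ENNReal.coe_toNNReal hVr]
      calc ∫⁻ y, ‖g y‖ₑ ≤ _ := h2
        _ ≤ (eLpNormLESNormFDerivOneConst volume p * ∫⁻ y, ‖fderiv ℝ g y‖ₑ) *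
            V ^ (1 / (1:ENNReal).toReal - 1 / (p:ENNReal).toReal) := by
          gcongr
          exact (eLpNorm_mono_measure _ Measure.restrict_le_self).trans h1
        _ = _ := by ring
    · intro y hy
      by_contra h
      simp [hgs y h] at hy

lemma norm_clm_le_sum {n : ℕ} (A : (Fin n → ℝ) →L[ℝ] ℝ) :
    ‖A‖ ≤ ∑ i, |A (Pi.single i 1)| := by
  refine A.opNorm_le_bound (Finset.sum_nonneg fun i _ => abs_nonneg _) fun y => ?_
  have hy : y = ∑ i, y i • (Pi.single i (1:ℝ) : Fin n → ℝ) := by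
    ext k; simp [Finset.sum_apply, Pi.single_apply]
  conv_lhs => rw [hy]
  rw [map_sum, Finset.sum_mul]
  refine (norm_sum_le _ _).trans (Finset.sum_le_sum fun i _ => ?_)
  rw [map_smul, norm_smul, mul_comm]
  exact mul_le_mul_of_nonneg_left (norm_le_pi_norm y i) (abs_nonneg _)

/-- The `L²` Poincaré inequality with a constant depending only on dimension and volume, obtained
from `poincare_L1` applied to `f²`. -/
lemma poincare_slice (n : ℕ) (hn : 1 ≤ n) (V₀ : ℝ) :
    ∃ C > (0:ℝ), ∀ s : Set (Fin n → ℝ), IsOpen s → Bornology.IsBounded s →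
      volume s = ENNReal.ofReal V₀ →
      ∀ f : (Fin n → ℝ) → ℝ, ContDiff ℝ 1 f → (∀ y ∉ s, f y = 0) →
      ∫ y, f y ^ 2 ≤ C * ∫ y, ∑ i, (fderiv ℝ f y (Pi.single i 1)) ^ 2 := by
  obtain ⟨C, hC⟩ := poincare_L1 n hn (ENNReal.ofReal V₀) ENNReal.ofReal_ne_top
  refine ⟨4 * C ^ 2 * n + 1, by positivity, fun s hs hsb hsV f hf hfs => ?_⟩
  have hfc : HasCompactSupport f := HasCompactSupport.of_support_subset_isCompact
    hsb.isCompact_closure fun y hy => by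
      by_contra h
      exact hy (hfs y fun h' => h (subset_closure h'))
  have hfd : Continuous (fderiv ℝ f) := hf.continuous_fderiv (by norm_num)
  have hg : ContDiff ℝ 1 (fun y => f y ^ 2) := hf.pow 2
  have hgc : HasCompactSupport (fun y => f y ^ 2) :=
    hfc.comp_left (g := fun r : ℝ => r ^ 2) (by simp)
  have hgi : Integrable (fun y => f y ^ 2) := hg.continuous.integrable_of_hasCompactSupport hgc
  have hgd : Continuous (fderiv ℝ (fun y => f y ^ 2)) := hg.continuous_fderiv (by norm_num)
  have hgdi : Integrable (fun y => fderiv ℝ (fun y => f y ^ 2) y) :=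
    hgd.integrable_of_hasCompactSupport (hgc.fderiv ℝ)
  have hDc : Continuous fun y => ∑ i, (fderiv ℝ f y (Pi.single i 1)) ^ 2 :=
    continuous_finsetSum _ fun i _ => (hfd.clm_apply continuous_const).pow 2
  have hDi : Integrable fun y => ∑ i, (fderiv ℝ f y (Pi.single i 1)) ^ 2 := by
    refine hDc.integrable_of_hasCompactSupport ?_
    exact (hfc.fderiv ℝ).comp_left
      (g := fun A : (Fin n → ℝ) →L[ℝ] ℝ => ∑ i, (A (Pi.single i 1)) ^ 2) (by simp)
  have h1 : ∫ y, f y ^ 2 ≤ C * ∫ y, ‖fderiv ℝ (fun y => f y ^ 2) y‖ := by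
    have h := hC s hs hsV _ hg hgc fun y hy => by simp [hfs y hy]
    rw [← ofReal_integral_norm_eq_lintegral_enorm hgi,
      ← ofReal_integral_norm_eq_lintegral_enorm hgdi, ← ENNReal.ofReal_coe_nnreal,
      ← ENNReal.ofReal_mul C.coe_nonneg, ENNReal.ofReal_le_ofReal_iff] at h
    · simpa using h
    · exact mul_nonneg C.coe_nonneg (integral_nonneg fun y => norm_nonneg _)
  have hpt : ∀ y, C * ‖fderiv ℝ (fun y => f y ^ 2) y‖ ≤
      1 / 2 * f y ^ 2 + 2 * C ^ 2 * n * ∑ i, (fderiv ℝ f y (Pi.single i 1)) ^ 2 := fun y => by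
    have hd : fderiv ℝ (fun y => f y ^ 2) y = (2 * f y) • fderiv ℝ f y := by
      have := ((hf.differentiable (by norm_num) y).hasFDerivAt.pow 2).fderiv
      simpa using this
    rw [hd, norm_smul, norm_mul, Real.norm_eq_abs, Real.norm_eq_abs, abs_two]
    set S := ∑ i, |fderiv ℝ f y (Pi.single i 1)| with hS
    have hN : ‖fderiv ℝ f y‖ ≤ S := norm_clm_le_sum _
    have hS2 : S ^ 2 ≤ n * ∑ i, (fderiv ℝ f y (Pi.single i 1)) ^ 2 := by
      have := sq_sum_le_card_mul_sum_sq (s := Finset.univ)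
        (f := fun i => |fderiv ℝ f y (Pi.single i 1)|)
      simpa using this
    have hC0 : (0:ℝ) ≤ C := C.2
    have h3 : (C:ℝ) * (2 * |f y| * ‖fderiv ℝ f y‖) ≤ C * (2 * |f y| * S) := by gcongr
    have h4 : (C:ℝ) * (2 * |f y| * S) ≤ 1 / 2 * f y ^ 2 + 2 * C ^ 2 * S ^ 2 := by
      rw [← sq_abs (f y)]
      nlinarith [sq_nonneg (|f y| - 2 * C * S)]
    have h5 : 2 * (C:ℝ) ^ 2 * S ^ 2 ≤
        2 * C ^ 2 * (n * ∑ i, (fderiv ℝ f y (Pi.single i 1)) ^ 2) := by gcongr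
    linarith
  have h2 : C * ∫ y, ‖fderiv ℝ (fun y => f y ^ 2) y‖ ≤
      1 / 2 * (∫ y, f y ^ 2) +
        2 * C ^ 2 * n * ∫ y, ∑ i, (fderiv ℝ f y (Pi.single i 1)) ^ 2 := by
    rw [← integral_const_mul, ← integral_const_mul, ← integral_const_mul,
      ← integral_add (hgi.const_mul _) (hDi.const_mul _)]
    exact integral_mono (hgdi.norm.const_mul _) ((hgi.const_mul _).add (hDi.const_mul _)) hpt
  have h3 : 0 ≤ ∫ y, ∑ i, (fderiv ℝ f y (Pi.single i 1)) ^ 2 :=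
    integral_nonneg fun y => Finset.sum_nonneg fun i _ => sq_nonneg _
  nlinarith

/-! ### The weighted Poincaré inequality on the strip -/

lemma contDiff_indicator {E : Type*} [NormedAddCommGroup E] [NormedSpace ℝ E] {Ω : Set E}
    {f : E → ℝ} (hΩ : IsOpen Ω) (hf : ContDiffOn ℝ 1 f Ω)
    (h : ∀ x ∉ Ω, ∀ᶠ y in nhds x, y ∈ Ω → f y = 0) : ContDiff ℝ 1 (Ω.indicator f) := by
  refine contDiff_iff_contDiffAt.2 fun x => ?_
  by_cases hx : x ∈ Ω
  · refine (hf.contDiffAt (hΩ.mem_nhds hx)).congr_of_eventuallyEq ?_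
    filter_upwards [hΩ.mem_nhds hx] with y hy using indicator_of_mem hy f
  · refine (contDiffAt_const (c := (0:ℝ))).congr_of_eventuallyEq ?_
    filter_upwards [h x hx] with y hy
    by_cases hyΩ : y ∈ Ω
    · rw [indicator_of_mem hyΩ, hy hyΩ]
    · rw [indicator_of_notMem hyΩ]

/-- A function that is continuous on `closure Ω` and vanishes on the boundary is small
in `Ω` near any point outside `Ω`. -/
lemma eventually_lt_of_frontier {E : Type*} [TopologicalSpace E] {Ω : Set E} (hΩ : IsOpen Ω)
    {f : E → ℝ} (hf : ContinuousOn f (closure Ω)) (hb : ∀ x ∈ frontier Ω, f x = 0)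
    {δ : ℝ} (hδ : 0 < δ) : ∀ x ∉ Ω, ∀ᶠ y in nhds x, y ∈ Ω → f y ≤ δ := by
  intro x hx
  by_cases hxc : x ∈ closure Ω
  · have hxf : x ∈ frontier Ω := by rw [hΩ.frontier_eq]; exact ⟨hxc, hx⟩
    have h1 : ∀ᶠ y in nhdsWithin x (closure Ω), f y < δ := by
      have := hf x hxc
      rw [ContinuousWithinAt, hb x hxf] at this
      exact this.eventually (gt_mem_nhds hδ)
    filter_upwards [eventually_nhdsWithin_iff.1 h1] with y hy hyΩ
    exact (hy (subset_closure hyΩ)).le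
  · filter_upwards [isClosed_closure.isOpen_compl.mem_nhds hxc] with y hy hyΩ
    exact absurd (subset_closure hyΩ) hy

lemma integral_cons {n : ℕ} {F : (Fin (n + 1) → ℝ) → ℝ} (hF : Integrable F) :
    Integrable (fun p : ℝ × (Fin n → ℝ) => F (Fin.cons p.1 p.2)) ∧
    ∫ x, F x = ∫ s : ℝ, ∫ y : Fin n → ℝ, F (Fin.cons s y) := by
  have hmp := (volume_preserving_piFinSuccAbove (fun _ : Fin (n + 1) => ℝ) 0).symm
  have he : ∀ p : ℝ × (Fin n → ℝ),
      (MeasurableEquiv.piFinSuccAbove (fun _ : Fin (n + 1) => ℝ) 0).symm p =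
        (Fin.cons p.1 p.2 : Fin (n + 1) → ℝ) := fun p => by
    simp [MeasurableEquiv.piFinSuccAbove, Fin.insertNthEquiv]
  have hi : Integrable (fun p : ℝ × (Fin n → ℝ) => F (Fin.cons p.1 p.2)) := by
    have := (hmp.integrable_comp_emb (MeasurableEquiv.measurableEmbedding _)).2 hF
    simpa only [Function.comp_def, he] using this
  refine ⟨hi, ?_⟩
  have h2 := hmp.integral_comp (MeasurableEquiv.measurableEmbedding _) F
  simp only [he] at h2
  rw [← h2]
  exact integral_prod _ hi

lemma isBounded_slab {n : ℕ} {Ω₀ : Set (Fin n → ℝ)} (hb : Bornology.IsBounded Ω₀) (R : ℝ) :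
    Bornology.IsBounded {x : Fin (n + 1) → ℝ | |x 0| ≤ R ∧ x ∈ strip Ω₀} := by
  obtain ⟨M, hM⟩ := hb.exists_norm_le
  refine isBounded_iff_forall_norm_le.2 ⟨max R M, fun x hx => ?_⟩
  have hM0 : 0 ≤ max R M := le_max_of_le_left ((abs_nonneg _).trans hx.1)
  refine (pi_norm_le_iff_of_nonneg hM0).2 fun i => ?_
  refine Fin.cases ?_ (fun j => ?_) i
  · exact le_max_of_le_left hx.1
  · exact le_max_of_le_right ((norm_le_pi_norm (fun i : Fin n => x i.succ) j).trans (hM _ hx.2))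

lemma hasCompactSupport_slab {n : ℕ} {Ω₀ : Set (Fin n → ℝ)} (hb : Bornology.IsBounded Ω₀)
    {R : ℝ} {F : (Fin (n + 1) → ℝ) → ℝ} (h1 : ∀ x ∉ strip Ω₀, F x = 0)
    (h2 : ∀ x, R ≤ |x 0| → F x = 0) : HasCompactSupport F := by
  refine HasCompactSupport.of_support_subset_isCompact
    (isBounded_slab hb R).isCompact_closure fun x hx => subset_closure ⟨?_, ?_⟩
  · by_contra h
    exact hx (h2 x (not_le.1 h).le)
  · by_contra h
    exact hx (h1 x h)

/-- The Poincaré inequality on each slice `{s} × Ω₀`, integrated against a weight in `s`. -/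
lemma poincare_strip {n : ℕ} {Ω₀ : Set (Fin n → ℝ)}
    (hb : Bornology.IsBounded Ω₀) {C : ℝ} (hC0 : 0 < C)
    (hC : ∀ f : (Fin n → ℝ) → ℝ, ContDiff ℝ 1 f → (∀ y ∉ Ω₀, f y = 0) →
      ∫ y, f y ^ 2 ≤ C * ∫ y, ∑ i, (fderiv ℝ f y (Pi.single i 1)) ^ 2)
    {V : (Fin (n + 1) → ℝ) → ℝ} (hV : ContDiff ℝ 1 V) (hV0 : ∀ x ∉ strip Ω₀, V x = 0)
    {w : ℝ → ℝ} (hw : Continuous w) (hw0 : ∀ s, 0 ≤ w s) {R : ℝ}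
    (hwR : ∀ s, R ≤ |s| → w s = 0) :
    ∫ x, V x ^ 2 * w (x 0) ≤ C * ∫ x, (∑ i, (pd i V x) ^ 2) * w (x 0) := by
  have hVd : Continuous (fderiv ℝ V) := hV.continuous_fderiv (by norm_num)
  have hpd : ∀ i, Continuous (pd i V) := fun i => hVd.clm_apply continuous_const
  have hw' : Continuous fun x : Fin (n + 1) → ℝ => w (x 0) := hw.comp (continuous_apply 0)
  have hi1 : Integrable fun x => V x ^ 2 * w (x 0) :=
    ((hV.continuous.pow 2).mul hw').integrable_of_hasCompactSupport
      (hasCompactSupport_slab (R := R) hb (fun x hx => by simp [hV0 x hx])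
        (fun x hx => by simp [hwR _ hx]))
  have hcs : HasCompactSupport fun x : Fin (n + 1) → ℝ => (∑ i, (pd i V x) ^ 2) * w (x 0) := by
    refine HasCompactSupport.of_support_subset_isCompact
      (isBounded_slab hb R).isCompact_closure fun x hx => ?_
    by_contra h
    refine hx ?_
    change _ * _ = _
    by_cases hxR : R ≤ |x 0|
    · rw [hwR _ hxR, mul_zero]
    · have hz : V =ᶠ[nhds x] fun _ => 0 := by
        have h3 : ∀ᶠ y : Fin (n + 1) → ℝ in nhds x, |y 0| < R :=
          (continuous_abs.comp (continuous_apply 0)).continuousAt.eventually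
            (gt_mem_nhds (not_le.1 hxR))
        filter_upwards [isClosed_closure.isOpen_compl.mem_nhds h, h3] with y hy hy3
        exact hV0 y fun hyΩ => hy (subset_closure ⟨hy3.le, hyΩ⟩)
      have : ∀ i, pd i V x = 0 := fun i => by simp [pd, hz.fderiv_eq]
      simp [this]
  have hi2 : Integrable fun x => (∑ i, (pd i V x) ^ 2) * w (x 0) :=
    ((continuous_finsetSum _ fun i _ => (hpd i).pow 2).mul hw').integrable_of_hasCompactSupport hcs
  obtain ⟨hj1, he1⟩ := integral_cons hi1
  obtain ⟨hj2, he2⟩ := integral_cons hi2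
  rw [he1, he2, ← integral_const_mul]
  refine integral_mono hj1.integral_prod_left (hj2.integral_prod_left.const_mul C) fun s => ?_
  simp only [Fin.cons_zero]
  rw [integral_mul_const, integral_mul_const, ← mul_assoc]
  refine mul_le_mul_of_nonneg_right ?_ (hw0 s)
  have hcons : ∀ y, HasFDerivAt (fun y : Fin n → ℝ => (Fin.cons s y : Fin (n + 1) → ℝ))
      (ContinuousLinearMap.pi fun i : Fin (n + 1) =>
        Fin.cases (motive := fun _ => (Fin n → ℝ) →L[ℝ] ℝ) 0
          (fun j => ContinuousLinearMap.proj j) i) y := fun y => by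
    refine hasFDerivAt_pi.2 fun i => ?_
    refine Fin.cases ?_ (fun j => ?_) i
    · simpa using hasFDerivAt_const s y
    · simpa using hasFDerivAt_apply (𝕜 := ℝ) j y
  have hconsC : ContDiff ℝ 1 (fun y : Fin n → ℝ => (Fin.cons s y : Fin (n + 1) → ℝ)) := by
    refine contDiff_pi.2 fun i => ?_
    refine Fin.cases ?_ (fun j => ?_) i
    · simpa using contDiff_const
    · simpa using contDiff_apply ℝ ℝ j
  have hsl := hC (fun y => V (Fin.cons s y)) (hV.comp hconsC)
    (fun y hy => hV0 _ (by simpa [strip] using hy))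
  have hder : ∀ y (i : Fin n), fderiv ℝ (fun y => V (Fin.cons s y)) y (Pi.single i 1) =
      pd i.succ V (Fin.cons s y) := fun y i => by
    have h1 := ((hV.differentiable (by norm_num) (Fin.cons s y)).hasFDerivAt.comp y
      (hcons y)).fderiv
    change fderiv ℝ (V ∘ fun y => Fin.cons s y) y (Pi.single i 1) = _
    rw [h1, pd, ContinuousLinearMap.comp_apply]
    congr 1
    ext j
    refine Fin.cases ?_ (fun j => ?_) j
    · simp
    · simp [Pi.single_apply]
  simp only [hder] at hsl
  refine hsl.trans (mul_le_mul_of_nonneg_left ?_ hC0.le)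
  have hpd0 : ∀ y ∉ closure Ω₀, ∀ i, pd i V (Fin.cons s y) = 0 := fun y hy i => by
    have hz : V =ᶠ[nhds (Fin.cons s y)] fun _ => 0 := by
      have hc : Continuous fun x : Fin (n + 1) → ℝ => (fun i : Fin n => x i.succ) := by fun_prop
      have h3 := hc.continuousAt.preimage_mem_nhds
        (isClosed_closure.isOpen_compl.mem_nhds
          (show (fun i : Fin n => (Fin.cons s y : Fin (n + 1) → ℝ) i.succ) ∈ (closure Ω₀)ᶜ by
            simpa using hy))
      filter_upwards [h3] with x hx
      exact hV0 x fun hxΩ => hx (subset_closure hxΩ)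
    simp [pd, hz.fderiv_eq]
  have h_integral : ∀ i, Integrable fun y : Fin n → ℝ => pd i V (Fin.cons s y) ^ 2 := fun i => by
    refine (((hpd i).comp hconsC.continuous).pow 2).integrable_of_hasCompactSupport ?_
    refine HasCompactSupport.of_support_subset_isCompact hb.isCompact_closure fun y hy => ?_
    by_contra h
    exact hy (by simp [hpd0 y h i])
  refine integral_mono (integrable_finsetSum _ fun i _ => h_integral _)
    (integrable_finsetSum _ fun i _ => h_integral _) fun y => ?_
  simp only [Fin.sum_univ_succ (n := n)]
  exact le_add_of_nonneg_left (sq_nonneg _)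

/-! ### The differential inequality for the truncated energy at a fixed time -/

/-- The algebra behind `slice_pointwise`. Here `S` stands for `∑ᵢ |∂ᵢ f|`, `P` for `|∇f|²`, `B` for
`b · ∇f`, `Fp` for `a ∇f · ∇f`, `F0` for `(a ∇f)₀`, `φ` for `f`, `T, τ, γ` for `Tf δ f`, `tauf δ f`,
`gpf δ f`, `r` for the cutoff and `dwv` for the derivative of the weight `r ^ (2 * k + 2)`. -/
lemma pointwise_alg {N lam Lam κ ε δ T τ γ φ r S P B cc Fp F0 dwv A A1 μ : ℝ} (k : ℕ)
    (hN : 0 < N) (hlam : 0 < lam) (hLam : 0 ≤ Lam) (hε : 0 ≤ ε) (hT : 0 ≤ T) (hτ : 0 ≤ τ)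
    (hγ : τ ^ 2 ≤ γ) (hφ0 : 0 ≤ T * τ * φ) (hφ : T * τ * φ ≤ 2 * T ^ 2 + δ ^ 2)
    (hTφ : T ^ 2 ≤ φ ^ 2) (hr : 0 ≤ r) (hr1 : r ≤ 1) (hS : 0 ≤ S) (hP : 0 ≤ P)
    (hSP : S ^ 2 ≤ N * P) (hB : B ≤ Real.sqrt ε * S) (hc : cc ≤ ε) (hFp : lam * P ≤ Fp)
    (hF0 : |F0| ≤ Lam * S) (hdw : |dwv| ≤ κ * r ^ (2 * k + 1))
    (hA : A = 2 * N / lam * Lam ^ 2 * κ ^ 2)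
    (hA1 : 0 ≤ A1) (hy : A * r ^ (2 * k) ≤ μ * r ^ (2 * k + 2) + A1) :
    2 * (T * τ) * r ^ (2 * k + 2) * (B + cc * φ)
        - 2 * (γ * r ^ (2 * k + 2) * Fp + F0 * (T * τ) * dwv) ≤
      -lam * (τ ^ 2 * P) * r ^ (2 * k + 2)
        + (μ + (2 * N / lam + 4) * ε) * (T ^ 2 * r ^ (2 * k + 2))
        + (A1 * φ ^ 2 + 2 * ε * δ ^ 2) := by
  have hyoung : ∀ x y : ℝ, 2 * (x * y) ≤ lam / (2 * N) * y ^ 2 + 2 * N / lam * x ^ 2 := by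
    intro x y
    have h := sq_nonneg (lam * y - 2 * N * x)
    have e : lam / (2 * N) * y ^ 2 + 2 * N / lam * x ^ 2 - 2 * (x * y) =
        (lam * y - 2 * N * x) ^ 2 / (2 * N * lam) := by field_simp; ring
    have : 0 ≤ (lam * y - 2 * N * x) ^ 2 / (2 * N * lam) := by positivity
    linarith
  have hSP' : lam / (2 * N) * S ^ 2 ≤ lam / 2 * P := by
    calc lam / (2 * N) * S ^ 2 ≤ lam / (2 * N) * (N * P) := by gcongr
      _ = lam / 2 * P := by field_simp
  set w := r ^ (2 * k + 2) with hw
  have hw0 : 0 ≤ w := by positivity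
  have hw1 : w ≤ 1 := pow_le_one₀ hr hr1
  -- the principal part
  have e1 : lam * (τ ^ 2 * P) * w ≤ γ * w * Fp := by
    calc lam * (τ ^ 2 * P) * w = τ ^ 2 * w * (lam * P) := by ring
      _ ≤ γ * w * Fp := by
          have := (sq_nonneg τ).trans hγ
          gcongr
  -- the zeroth order term
  have e2 : 2 * (T * τ) * w * (cc * φ) ≤ 4 * ε * (T ^ 2 * w) + 2 * ε * δ ^ 2 := by
    calc 2 * (T * τ) * w * (cc * φ) = 2 * cc * (T * τ * φ) * w := by ring
      _ ≤ 2 * ε * (T * τ * φ) * w := by gcongr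
      _ ≤ 2 * ε * (2 * T ^ 2 + δ ^ 2) * w := by gcongr
      _ = 4 * ε * (T ^ 2 * w) + 2 * ε * δ ^ 2 * w := by ring
      _ ≤ 4 * ε * (T ^ 2 * w) + 2 * ε * δ ^ 2 * 1 := by gcongr
      _ = _ := by ring
  -- the first order term
  have e3 : 2 * (T * τ) * w * B ≤ lam / 2 * (τ ^ 2 * P) * w + 2 * N / lam * ε * (T ^ 2 * w) := by
    calc 2 * (T * τ) * w * B ≤ 2 * (T * τ) * w * (Real.sqrt ε * S) := by gcongr
      _ = 2 * ((Real.sqrt ε * T) * (τ * S)) * w := by ring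
      _ ≤ (lam / (2 * N) * (τ * S) ^ 2 + 2 * N / lam * (Real.sqrt ε * T) ^ 2) * w := by
          gcongr; exact hyoung _ _
      _ = (τ ^ 2 * (lam / (2 * N) * S ^ 2) + 2 * N / lam * (ε * T ^ 2)) * w := by
          rw [mul_pow (Real.sqrt ε), Real.sq_sqrt hε]; ring
      _ ≤ (τ ^ 2 * (lam / 2 * P) + 2 * N / lam * (ε * T ^ 2)) * w := by gcongr
      _ = _ := by ring
  -- the term in which the derivative falls on the weight
  have e4 : -(2 * (F0 * (T * τ) * dwv)) ≤ lam / 2 * (τ ^ 2 * P) * w + A * r ^ (2 * k) * T ^ 2 := by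
    calc -(2 * (F0 * (T * τ) * dwv)) ≤ |2 * (F0 * (T * τ) * dwv)| := neg_le_abs _
      _ = 2 * (|F0| * (T * τ) * |dwv|) := by
          rw [abs_mul, abs_mul, abs_mul, abs_two, abs_of_nonneg (mul_nonneg hT hτ)]
      _ ≤ 2 * ((Lam * S) * (T * τ) * (κ * r ^ (2 * k + 1))) := by gcongr
      _ = 2 * ((Lam * κ * T * r ^ k) * (τ * S * r ^ (k + 1))) := by ring
      _ ≤ _ := hyoung _ _
      _ = (lam / (2 * N) * S ^ 2) * (τ ^ 2 * w) + A * r ^ (2 * k) * T ^ 2 := by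
          rw [hA, hw]; ring
      _ ≤ (lam / 2 * P) * (τ ^ 2 * w) + A * r ^ (2 * k) * T ^ 2 := by gcongr
      _ = _ := by ring
  have e5 : A * r ^ (2 * k) * T ^ 2 ≤ μ * (T ^ 2 * w) + A1 * φ ^ 2 := by
    calc A * r ^ (2 * k) * T ^ 2 ≤ (μ * w + A1) * T ^ 2 := by gcongr
      _ = μ * (T ^ 2 * w) + A1 * T ^ 2 := by ring
      _ ≤ _ := by gcongr
  linarith

lemma integral_pd_eq_zero {n : ℕ} {X : (Fin (n + 1) → ℝ) → ℝ} (hX : ContDiff ℝ 1 X)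
    (hc : HasCompactSupport X) (i : Fin (n + 1)) :
    Integrable (pd i X) ∧ ∫ x, pd i X x = 0 := by
  have hd : Continuous (fderiv ℝ X) := hX.continuous_fderiv (by norm_num)
  have hi : Integrable (pd i X) := by
    refine (hd.clm_apply continuous_const).integrable_of_hasCompactSupport ?_
    exact (hc.fderiv ℝ).comp_left
      (g := fun A : (Fin (n + 1) → ℝ) →L[ℝ] ℝ => A (Pi.single i 1)) (by simp)
  refine ⟨hi, ?_⟩
  have := integral_mul_fderiv_eq_neg_fderiv_mul_of_integrable (μ := volume) (𝕜 := ℝ)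
    (f := fun _ : Fin (n + 1) → ℝ => (1 : ℝ)) (g := X) (v := Pi.single i 1)
    (by simp) (by simp only [one_mul]; exact hi)
    (by simpa using hX.continuous.integrable_of_hasCompactSupport hc)
    (by simp) (fun x _ => hX.differentiable (by norm_num) x)
  simpa [pd] using this

lemma Tf_contDiff {δ : ℝ} (hδ : 0 < δ) : ContDiff ℝ 1 (Tf δ) := by
  refine contDiff_one_iff_deriv.2 ⟨fun s => (Tf_hasDerivAt hδ s).differentiableAt, ?_⟩
  rw [funext fun s => (Tf_hasDerivAt hδ s).deriv]
  exact tauf_continuous hδ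

lemma Ttau_contDiff {δ : ℝ} (hδ : 0 < δ) : ContDiff ℝ 1 (fun s => Tf δ s * tauf δ s) := by
  refine contDiff_one_iff_deriv.2 ⟨fun s => (Ttau_hasDerivAt hδ s).differentiableAt, ?_⟩
  rw [funext fun s => (Ttau_hasDerivAt hδ s).deriv]
  exact gpf_continuous hδ

lemma weight_contDiff (k : ℕ) (R : ℝ) : ContDiff ℝ 1 (fun s => rho R s ^ (2 * k + 2)) := by
  refine contDiff_one_iff_deriv.2 ⟨fun s => (w_hasDerivAt k R s).differentiableAt, ?_⟩
  rw [funext fun s => (w_hasDerivAt k R s).deriv]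
  exact dw_continuous k R

lemma pd_comp {n : ℕ} {φ : ℝ → ℝ} {φ' : ℝ} {f : (Fin (n + 1) → ℝ) → ℝ} {x : Fin (n + 1) → ℝ}
    (hφ : HasDerivAt φ φ' (f x)) (hf : DifferentiableAt ℝ f x) (i : Fin (n + 1)) :
    pd i (fun y => φ (f y)) x = φ' * pd i f x := by
  have h := (hφ.comp_hasFDerivAt x hf.hasFDerivAt).fderiv
  rw [pd, pd, show (fun y => φ (f y)) = φ ∘ f from rfl, h]
  simp

lemma pd_mul {n : ℕ} {f g : (Fin (n + 1) → ℝ) → ℝ} {x : Fin (n + 1) → ℝ}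
    (hf : DifferentiableAt ℝ f x) (hg : DifferentiableAt ℝ g x) (i : Fin (n + 1)) :
    pd i (fun y => f y * g y) x = pd i f x * g x + f x * pd i g x := by
  have h := (hf.hasFDerivAt.mul hg.hasFDerivAt).fderiv
  rw [pd, pd, pd, show (fun y => f y * g y) = f * g from rfl, h]
  simp
  ring

lemma pd_congr {n : ℕ} {f g : (Fin (n + 1) → ℝ) → ℝ} {x : Fin (n + 1) → ℝ}
    (h : f =ᶠ[nhds x] g) (i : Fin (n + 1)) : pd i f x = pd i g x := by
  rw [pd, pd, h.fderiv_eq]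

/-- The `C¹` truncation `Tf δ (f x)` of `f`, extended by zero outside the strip. -/
def trunc {n : ℕ} (Ω₀ : Set (Fin n → ℝ)) (δ : ℝ) (f : (Fin (n + 1) → ℝ) → ℝ) :
    (Fin (n + 1) → ℝ) → ℝ :=
  (strip Ω₀).indicator fun x => Tf δ (f x)

lemma Dset_measurable {n : ℕ} {Ω₀ : Set (Fin n → ℝ)} (hΩ₀ : IsOpen Ω₀) (R : ℝ) :
    MeasurableSet (Dset Ω₀ R) :=
  ((isOpen_Ioo.preimage (continuous_apply 0)).inter (strip_isOpen hΩ₀)).measurableSet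

lemma mem_Dset_iff {n : ℕ} {Ω₀ : Set (Fin n → ℝ)} {R : ℝ} {x : Fin (n + 1) → ℝ} :
    x ∈ Dset Ω₀ R ↔ |x 0| < R ∧ x ∈ strip Ω₀ := by
  rw [abs_lt]; rfl

section Slice

variable {n : ℕ} {Ω₀ : Set (Fin n → ℝ)} {f : (Fin (n + 1) → ℝ) → ℝ} {δ : ℝ}

lemma trunc_contDiff (hΩ₀ : IsOpen Ω₀) (hδ : 0 < δ) (hfc : ContinuousOn f (closure (strip Ω₀)))
    (hf : ContDiffOn ℝ 2 f (strip Ω₀)) (hfb : ∀ x ∈ frontier (strip Ω₀), f x = 0) :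
    ContDiff ℝ 1 (trunc Ω₀ δ f) := by
  refine contDiff_indicator (strip_isOpen hΩ₀)
    ((Tf_contDiff hδ).comp_contDiffOn (hf.of_le (by norm_num))) fun x hx => ?_
  filter_upwards [eventually_lt_of_frontier (strip_isOpen hΩ₀) hfc hfb hδ x hx] with y hy hyΩ
  exact Tf_eq_zero hδ (hy hyΩ)

lemma pd_trunc (hΩ₀ : IsOpen Ω₀) (hδ : 0 < δ) (hf : ContDiffOn ℝ 2 f (strip Ω₀))
    {x : Fin (n + 1) → ℝ} (hx : x ∈ strip Ω₀) (i : Fin (n + 1)) :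
    pd i (trunc Ω₀ δ f) x = tauf δ (f x) * pd i f x := by
  have hnh := (strip_isOpen hΩ₀).mem_nhds hx
  rw [← pd_comp (Tf_hasDerivAt hδ (f x)) ((hf.contDiffAt hnh).differentiableAt (by norm_num)) i]
  refine pd_congr ?_ i
  filter_upwards [hnh] with y hy using indicator_of_mem hy _

/-- The vector field `(a ∇f)ᵢ (Tf · tauf)(f) w`, extended by zero; its divergence integrates
to zero. -/
def fluxField (Ω₀ : Set (Fin n → ℝ)) (a : (Fin (n + 1) → ℝ) → Fin (n + 1) → Fin (n + 1) → ℝ)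
    (f : (Fin (n + 1) → ℝ) → ℝ) (δ : ℝ) (k : ℕ) (R : ℝ) (i : Fin (n + 1))
    (x : Fin (n + 1) → ℝ) : ℝ :=
  (strip Ω₀).indicator (fun x => (∑ j, a x i j * pd j f x) * (Tf δ (f x) * tauf δ (f x))) x *
    rho R (x 0) ^ (2 * k + 2)

variable {a : (Fin (n + 1) → ℝ) → Fin (n + 1) → Fin (n + 1) → ℝ}

lemma fluxField_contDiff (hΩ₀ : IsOpen Ω₀) (hδ : 0 < δ)
    (ha : ∀ i j, ContDiffOn ℝ 1 (fun x => a x i j) (strip Ω₀))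
    (hfc : ContinuousOn f (closure (strip Ω₀)))
    (hf : ContDiffOn ℝ 2 f (strip Ω₀)) (hfb : ∀ x ∈ frontier (strip Ω₀), f x = 0)
    (k : ℕ) (R : ℝ) (i : Fin (n + 1)) : ContDiff ℝ 1 (fluxField Ω₀ a f δ k R i) := by
  refine ContDiff.mul (contDiff_indicator (strip_isOpen hΩ₀)
    ((flux_contDiffOn (strip_isOpen hΩ₀) ha hf i).mul
    ((Ttau_contDiff hδ).comp_contDiffOn (hf.of_le (by norm_num)))) fun x hx => ?_)
    ((weight_contDiff k R).comp (contDiff_apply ℝ ℝ 0))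
  filter_upwards [eventually_lt_of_frontier (strip_isOpen hΩ₀) hfc hfb hδ x hx] with y hy hyΩ
  rw [Tf_eq_zero hδ (hy hyΩ)]
  ring

lemma pd_fluxField (hΩ₀ : IsOpen Ω₀) (hδ : 0 < δ)
    (ha : ∀ i j, ContDiffOn ℝ 1 (fun x => a x i j) (strip Ω₀))
    (hf : ContDiffOn ℝ 2 f (strip Ω₀)) (k : ℕ) (R : ℝ) (i : Fin (n + 1))
    {x : Fin (n + 1) → ℝ} (hx : x ∈ strip Ω₀) :
    pd i (fluxField Ω₀ a f δ k R i) x =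
      pd i (fun y => ∑ j, a y i j * pd j f y) x * (Tf δ (f x) * tauf δ (f x)) *
          rho R (x 0) ^ (2 * k + 2)
        + (∑ j, a x i j * pd j f x) * (gpf δ (f x) * pd i f x) * rho R (x 0) ^ (2 * k + 2)
        + (∑ j, a x i j * pd j f x) * (Tf δ (f x) * tauf δ (f x)) *
          (if i = 0 then dw k R (x 0) else 0) := by
  have hnh := (strip_isOpen hΩ₀).mem_nhds hx
  have hfd : DifferentiableAt ℝ f x := (hf.contDiffAt hnh).differentiableAt (by norm_num)
  have hF : DifferentiableAt ℝ (fun y => ∑ j, a y i j * pd j f y) x :=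
    ((flux_contDiffOn (strip_isOpen hΩ₀) ha hf i).contDiffAt hnh).differentiableAt (by norm_num)
  have hg : DifferentiableAt ℝ (fun y => Tf δ (f y) * tauf δ (f y)) x :=
    (Ttau_hasDerivAt hδ (f x)).differentiableAt.comp x hfd
  have hp : DifferentiableAt ℝ (fun y : Fin (n + 1) → ℝ => y 0) x :=
    (hasFDerivAt_apply (𝕜 := ℝ) (0 : Fin (n + 1)) x).differentiableAt
  have hw : DifferentiableAt ℝ (fun y : Fin (n + 1) → ℝ => rho R (y 0) ^ (2 * k + 2)) x :=
    ((weight_contDiff k R).comp (contDiff_apply ℝ ℝ 0)).differentiable (by norm_num) x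
  have h1 : pd i (fluxField Ω₀ a f δ k R i) x =
      pd i (fun y => ((∑ j, a y i j * pd j f y) * (Tf δ (f y) * tauf δ (f y))) *
        rho R (y 0) ^ (2 * k + 2)) x := by
    refine pd_congr ?_ i
    filter_upwards [hnh] with y hy
    rw [fluxField, indicator_of_mem hy]
  have h2 : pd i (fun y : Fin (n + 1) → ℝ => y 0) x = if i = 0 then 1 else 0 := by
    rw [pd, (hasFDerivAt_apply (𝕜 := ℝ) (0 : Fin (n + 1)) x).fderiv]
    simp [Pi.single_apply, eq_comm]
  rw [h1, pd_mul (hF.fun_mul hg) hw, pd_mul hF hg, pd_comp (Ttau_hasDerivAt hδ (f x)) hfd,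
    pd_comp (w_hasDerivAt k R (x 0)) hp, h2]
  split_ifs <;> ring

lemma pd_trunc_eq_zero (hΩ₀ : IsOpen Ω₀) (hδ : 0 < δ) (hfc : ContinuousOn f (closure (strip Ω₀)))
    (hfb : ∀ x ∈ frontier (strip Ω₀), f x = 0) {x : Fin (n + 1) → ℝ} (hx : x ∉ strip Ω₀)
    (i : Fin (n + 1)) : pd i (trunc Ω₀ δ f) x = 0 := by
  have : trunc Ω₀ δ f =ᶠ[nhds x] fun _ => 0 := by
    filter_upwards [eventually_lt_of_frontier (strip_isOpen hΩ₀) hfc hfb hδ x hx] with y hy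
    exact indicator_apply_eq_zero.2 fun hyΩ => Tf_eq_zero hδ (hy hyΩ)
  rw [pd_congr this]
  simp [pd]

lemma pd_fluxField_eq_zero (hΩ₀ : IsOpen Ω₀) (hδ : 0 < δ)
    (hfc : ContinuousOn f (closure (strip Ω₀)))
    (hfb : ∀ x ∈ frontier (strip Ω₀), f x = 0) {x : Fin (n + 1) → ℝ} (hx : x ∉ strip Ω₀)
    (k : ℕ) (R : ℝ) (i : Fin (n + 1)) : pd i (fluxField Ω₀ a f δ k R i) x = 0 := by
  have : fluxField Ω₀ a f δ k R i =ᶠ[nhds x] fun _ => 0 := by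
    filter_upwards [eventually_lt_of_frontier (strip_isOpen hΩ₀) hfc hfb hδ x hx] with y hy
    rw [fluxField, indicator_apply_eq_zero.2 fun hyΩ => by rw [Tf_eq_zero hδ (hy hyΩ)]; ring]
    ring
  rw [pd_congr this]
  simp [pd]

variable {b : (Fin (n + 1) → ℝ) → Fin (n + 1) → ℝ} {c : (Fin (n + 1) → ℝ) → ℝ}

/-- The time derivative of the truncated energy density, minus twice a divergence, is bounded
by a negative multiple of the weighted gradient plus small terms. -/
lemma slice_pointwise (hΩ₀ : IsOpen Ω₀) (hδ : 0 < δ) {lam Lam ε μ R : ℝ} (hlam : 0 < lam)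
    (hLam : 0 < Lam) (hε : 0 < ε) (hμ : 0 < μ) (hR : 0 < R)
    (hG : GoodCoeffs Ω₀ lam Lam a b c) (hS : Smallness Ω₀ b c ε)
    (hfc : ContinuousOn f (closure (strip Ω₀)))
    (hf : ContDiffOn ℝ 2 f (strip Ω₀)) (hfb : ∀ x ∈ frontier (strip Ω₀), f x = 0)
    (k : ℕ) {A : ℝ} (hA : A = 2 * (n + 1) / lam * Lam ^ 2 * (4 * (k + 1) / R) ^ 2)
    (x : Fin (n + 1) → ℝ) :
    (strip Ω₀).indicator (fun x => 2 * (Tf δ (f x) * tauf δ (f x)) * rho R (x 0) ^ (2 * k + 2) *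
        Lop a b c f x) x - 2 * ∑ i, pd i (fluxField Ω₀ a f δ k R i) x ≤
      -lam * ((∑ i, pd i (trunc Ω₀ δ f) x ^ 2) * rho R (x 0) ^ (2 * k + 2))
      + (μ + (2 * (n + 1) / lam + 4) * ε) * (trunc Ω₀ δ f x ^ 2 * rho R (x 0) ^ (2 * k + 2))
      + (Dset Ω₀ R).indicator (fun x => A * (A / μ) ^ k * f x ^ 2 + 2 * ε * δ ^ 2) x := by
  by_cases hx : x ∈ strip Ω₀
  swap
  · have hxD : x ∉ Dset Ω₀ R := fun h => hx h.2
    rw [indicator_of_notMem hx, indicator_of_notMem hxD, trunc, indicator_of_notMem hx]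
    have h1 : ∀ i, pd i (fluxField Ω₀ a f δ k R i) x = 0 :=
      pd_fluxField_eq_zero hΩ₀ hδ hfc hfb hx k R
    have h2 : ∀ i, pd i ((strip Ω₀).indicator fun x => Tf δ (f x)) x = 0 :=
      pd_trunc_eq_zero hΩ₀ hδ hfc hfb hx
    simp [h1, h2]
  rw [indicator_of_mem hx, trunc, indicator_of_mem hx, ← trunc]
  simp only [pd_fluxField hΩ₀ hδ hG.a_reg hf k R _ hx, pd_trunc hΩ₀ hδ hf hx]
  by_cases hxR : R ≤ |x 0|
  · have hxD : x ∉ Dset Ω₀ R := fun h => absurd hxR (not_le.2 (mem_Dset_iff.1 h).1)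
    have hr : rho R (x 0) = 0 := rho_eq_zero hR hxR
    have hd : dw k R (x 0) = 0 := by
      have := abs_dw_le (k := k) (s := x 0) hR
      rw [hr] at this
      simpa using this
    rw [indicator_of_notMem hxD, hr, hd]
    simp
  rw [indicator_of_mem (mem_Dset_iff.2 ⟨not_le.1 hxR, hx⟩)]
  have hA0 : 0 < A := by rw [hA]; positivity
  obtain ⟨hb, hc⟩ := hS x hx
  set S := ∑ i, |pd i f x| with hSdef
  have hFabs : |∑ j, a x 0 j * pd j f x| ≤ Lam * S := by
    rw [hSdef, Finset.mul_sum]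
    refine (Finset.abs_sum_le_sum_abs _ _).trans (Finset.sum_le_sum fun j _ => ?_)
    rw [abs_mul]
    exact mul_le_mul_of_nonneg_right (hG.a_bdd x hx 0 j) (abs_nonneg _)
  have hB : ∑ i, b x i * pd i f x ≤ Real.sqrt ε * S := by
    rw [hSdef, Finset.mul_sum]
    refine Finset.sum_le_sum fun j _ => (le_abs_self _).trans ?_
    rw [abs_mul]
    exact mul_le_mul_of_nonneg_right (hb j) (abs_nonneg _)
  have hSP : S ^ 2 ≤ ((n:ℝ) + 1) * ∑ i, pd i f x ^ 2 := by
    have := sq_sum_le_card_mul_sum_sq (s := Finset.univ) (f := fun i => |pd i f x|)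
    simpa using this
  have hFp : lam * ∑ i, pd i f x ^ 2 ≤ ∑ i, (∑ j, a x i j * pd j f x) * pd i f x := by
    refine (hG.elliptic x hx fun i => pd i f x).trans_eq ?_
    refine Finset.sum_congr rfl fun i _ => ?_
    rw [Finset.sum_mul]
    exact Finset.sum_congr rfl fun j _ => by ring
  have key := pointwise_alg (N := n + 1) (lam := lam) (Lam := Lam) (κ := 4 * (k + 1) / R)
    (ε := ε) (δ := δ) (T := Tf δ (f x)) (τ := tauf δ (f x)) (γ := gpf δ (f x)) (φ := f x)
    (r := rho R (x 0)) (S := S) (P := ∑ i, pd i f x ^ 2) (B := ∑ i, b x i * pd i f x)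
    (cc := c x) (Fp := ∑ i, (∑ j, a x i j * pd j f x) * pd i f x)
    (F0 := ∑ j, a x 0 j * pd j f x) (dwv := dw k R (x 0)) (A := A) (A1 := A * (A / μ) ^ k)
    (μ := μ) k (by positivity) hlam hLam.le hε.le (Tf_nonneg hδ _) (tauf_nonneg hδ _)
    (tauf_sq_le_gpf hδ _) (self_mul_Ttau_nonneg hδ _) (self_mul_Ttau_le hδ _) (Tf_sq_le hδ _)
    (rho_nonneg _ _) (rho_le_one _ _) (Finset.sum_nonneg fun i _ => abs_nonneg _)
    (Finset.sum_nonneg fun i _ => sq_nonneg _) hSP hB hc hFp hFabs (abs_dw_le hR) hA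
    (by positivity) (young_rho hA0 hμ k (rho_nonneg _ _))
  refine le_trans (le_of_eq ?_) (key.trans (le_of_eq ?_))
  · rw [Finset.sum_add_distrib, Finset.sum_add_distrib]
    have s1 : ∑ i, pd i (fun y => ∑ j, a y i j * pd j f y) x * (Tf δ (f x) * tauf δ (f x)) *
        rho R (x 0) ^ (2 * k + 2) = (∑ i, pd i (fun y => ∑ j, a y i j * pd j f y) x) *
        ((Tf δ (f x) * tauf δ (f x)) * rho R (x 0) ^ (2 * k + 2)) := by
      rw [Finset.sum_mul]; exact Finset.sum_congr rfl fun i _ => by ring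
    have s2 : ∑ i, (∑ j, a x i j * pd j f x) * (gpf δ (f x) * pd i f x) *
        rho R (x 0) ^ (2 * k + 2) = gpf δ (f x) * rho R (x 0) ^ (2 * k + 2) *
        ∑ i, (∑ j, a x i j * pd j f x) * pd i f x := by
      rw [Finset.mul_sum]; exact Finset.sum_congr rfl fun i _ => by ring
    have s3 : ∑ i, (∑ j, a x i j * pd j f x) * (Tf δ (f x) * tauf δ (f x)) *
        (if i = 0 then dw k R (x 0) else 0) =
        (∑ j, a x 0 j * pd j f x) * (Tf δ (f x) * tauf δ (f x)) * dw k R (x 0) := by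
      simp
    rw [s1, s2, s3, Lop]
    ring
  · have s4 : ∑ i, (tauf δ (f x) * pd i f x) ^ 2 = tauf δ (f x) ^ 2 * ∑ i, pd i f x ^ 2 := by
      rw [Finset.mul_sum]; exact Finset.sum_congr rfl fun i _ => by ring
    rw [s4]
    ring

end Slice

section SliceEnergy

variable {n : ℕ} {Ω₀ : Set (Fin n → ℝ)} {f : (Fin (n + 1) → ℝ) → ℝ}
  {a : (Fin (n + 1) → ℝ) → Fin (n + 1) → Fin (n + 1) → ℝ}
  {b : (Fin (n + 1) → ℝ) → Fin (n + 1) → ℝ} {c : (Fin (n + 1) → ℝ) → ℝ}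

lemma isCompact_slab (hb : Bornology.IsBounded Ω₀) (R : ℝ) :
    IsCompact {x : Fin (n + 1) → ℝ | |x 0| ≤ R ∧ x ∈ closure (strip Ω₀)} := by
  have hc : IsClosed {x : Fin (n + 1) → ℝ | |x 0| ≤ R ∧ x ∈ closure (strip Ω₀)} :=
    (isClosed_le (continuous_abs.comp (continuous_apply 0)) continuous_const).inter
      isClosed_closure
  refine Metric.isCompact_of_isClosed_isBounded hc ?_
  refine (isBounded_slab hb (R + 1)).closure.subset ?_
  rintro x ⟨h1, h2⟩
  have ho : IsOpen {x : Fin (n + 1) → ℝ | |x 0| < R + 1} :=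
    isOpen_lt (continuous_abs.comp (continuous_apply 0)) continuous_const
  have : x ∈ closure ({x : Fin (n + 1) → ℝ | |x 0| < R + 1} ∩ strip Ω₀) :=
    ho.inter_closure ⟨show |x 0| < R + 1 by linarith, h2⟩
  refine closure_mono ?_ this
  exact fun y hy => ⟨le_of_lt hy.1, hy.2⟩

lemma Dset_subset_slab (R : ℝ) :
    Dset Ω₀ R ⊆ {x : Fin (n + 1) → ℝ | |x 0| ≤ R ∧ x ∈ closure (strip Ω₀)} := fun _ hx =>
  ⟨(mem_Dset_iff.1 hx).1.le, subset_closure hx.2⟩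

lemma Dset_volume_ne_top (hb : Bornology.IsBounded Ω₀) (R : ℝ) : volume (Dset Ω₀ R) ≠ ⊤ :=
  ((measure_mono (Dset_subset_slab R)).trans_lt (isCompact_slab hb R).measure_lt_top).ne

lemma integrableOn_Dset (hb : Bornology.IsBounded Ω₀)
    (hfc : ContinuousOn f (closure (strip Ω₀))) (R : ℝ) : IntegrableOn f (Dset Ω₀ R) :=
  ((hfc.mono fun _ hx => hx.2).integrableOn_compact (isCompact_slab hb R)).mono_set
    (Dset_subset_slab R)

/-- The truncated weighted energy satisfies `E' ≤ -μ E + (lower order)` at each time: the right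
hand side of the equation, tested against `2 (Tf · tauf)(f) w`. -/
lemma slice_energy (hΩ₀ : IsOpen Ω₀) (hbd : Bornology.IsBounded Ω₀) {δ lam Lam ε R CP : ℝ}
    (hδ : 0 < δ) (hlam : 0 < lam) (hLam : 0 < Lam) (hε : 0 < ε) (hR : 0 < R) (hCP : 0 < CP)
    (hC : ∀ f : (Fin n → ℝ) → ℝ, ContDiff ℝ 1 f → (∀ y ∉ Ω₀, f y = 0) →
      ∫ y, f y ^ 2 ≤ CP * ∫ y, ∑ i, (fderiv ℝ f y (Pi.single i 1)) ^ 2)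
    (hεle : (2 * (n + 1) / lam + 4) * ε ≤ lam / (2 * CP))
    (hG : GoodCoeffs Ω₀ lam Lam a b c) (hS : Smallness Ω₀ b c ε)
    (hfc : ContinuousOn f (closure (strip Ω₀)))
    (hf : ContDiffOn ℝ 2 f (strip Ω₀)) (hfb : ∀ x ∈ frontier (strip Ω₀), f x = 0)
    (k : ℕ) {A μ : ℝ} (hA : A = 2 * (n + 1) / lam * Lam ^ 2 * (4 * (k + 1) / R) ^ 2)
    (hμ : μ = lam / (4 * CP))
    (hGi : Integrable ((strip Ω₀).indicator fun x => 2 * (Tf δ (f x) * tauf δ (f x)) *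
      rho R (x 0) ^ (2 * k + 2) * Lop a b c f x)) :
    ∫ x, (strip Ω₀).indicator (fun x => 2 * (Tf δ (f x) * tauf δ (f x)) *
        rho R (x 0) ^ (2 * k + 2) * Lop a b c f x) x ≤
      -μ * (∫ x, trunc Ω₀ δ f x ^ 2 * rho R (x 0) ^ (2 * k + 2))
      + (A * (A / μ) ^ k * (∫ x in Dset Ω₀ R, f x ^ 2)
        + 2 * ε * δ ^ 2 * volume.real (Dset Ω₀ R)) := by
  have hμ0 : 0 < μ := by rw [hμ]; positivity
  have hV := trunc_contDiff hΩ₀ hδ hfc hf hfb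
  have hV0 : ∀ x ∉ strip Ω₀, trunc Ω₀ δ f x = 0 := fun x hx => indicator_of_notMem hx _
  have hwc : Continuous fun s => rho R s ^ (2 * k + 2) := (rho_continuous R).pow _
  have hwR : ∀ s, R ≤ |s| → rho R s ^ (2 * k + 2) = 0 := fun s hs => by
    rw [rho_eq_zero hR hs]; simp
  have hP := poincare_strip hbd hCP hC hV hV0 hwc (fun s => pow_nonneg (rho_nonneg R s) _) hwR
  have hwx : Continuous fun x : Fin (n + 1) → ℝ => rho R (x 0) ^ (2 * k + 2) :=
    hwc.comp (continuous_apply 0)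
  have hi1 : Integrable fun x => trunc Ω₀ δ f x ^ 2 * rho R (x 0) ^ (2 * k + 2) :=
    ((hV.continuous.pow 2).mul hwx).integrable_of_hasCompactSupport
      (hasCompactSupport_slab (R := R) hbd (fun x hx => by simp [hV0 x hx])
        (fun x hx => by simp [hwR _ hx]))
  have hpd : ∀ i, Continuous (pd i (trunc Ω₀ δ f)) := fun i =>
    (hV.continuous_fderiv (by norm_num)).clm_apply continuous_const
  have hi2 : Integrable fun x => (∑ i, pd i (trunc Ω₀ δ f) x ^ 2) * rho R (x 0) ^ (2 * k + 2) :=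
    ((continuous_finsetSum _ fun i _ => (hpd i).pow 2).mul hwx).integrable_of_hasCompactSupport
      (hasCompactSupport_slab (R := R) hbd
        (fun x hx => by simp [pd_trunc_eq_zero hΩ₀ hδ hfc hfb hx])
        (fun x hx => by simp [hwR _ hx]))
  have hdiv : ∀ i, Integrable (pd i (fluxField Ω₀ a f δ k R i)) ∧
      ∫ x, pd i (fluxField Ω₀ a f δ k R i) x = 0 := fun i =>
    integral_pd_eq_zero (fluxField_contDiff hΩ₀ hδ hG.a_reg hfc hf hfb k R i)
      (hasCompactSupport_slab (R := R) hbd (fun x hx => by simp [fluxField, hx])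
        (fun x hx => by simp [fluxField, hwR _ hx])) i
  have hi3 : Integrable fun x => 2 * ∑ i, pd i (fluxField Ω₀ a f δ k R i) x :=
    (integrable_finsetSum _ fun i _ => (hdiv i).1).const_mul 2
  have hz : ∫ x, 2 * ∑ i, pd i (fluxField Ω₀ a f δ k R i) x = 0 := by
    rw [integral_const_mul, integral_finsetSum _ fun i _ => (hdiv i).1]
    simp [(hdiv _).2]
  have hf2 : IntegrableOn (fun x => f x ^ 2) (Dset Ω₀ R) := integrableOn_Dset hbd (hfc.pow 2) R
  have hcst : IntegrableOn (fun _ : Fin (n + 1) → ℝ => 2 * ε * δ ^ 2) (Dset Ω₀ R) :=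
    integrableOn_const (Dset_volume_ne_top hbd R)
  have hi4 : Integrable ((Dset Ω₀ R).indicator
      fun x => A * (A / μ) ^ k * f x ^ 2 + 2 * ε * δ ^ 2) :=
    (integrable_indicator_iff (Dset_measurable hΩ₀ R)).2 ((hf2.const_mul _).add hcst)
  have hmono := integral_mono (hGi.sub hi3)
    (((hi2.const_mul (-lam)).add (hi1.const_mul (μ + (2 * (n + 1) / lam + 4) * ε))).add hi4)
    (slice_pointwise hΩ₀ hδ hlam hLam hε hμ0 hR hG hS hfc hf hfb k hA)
  have e1 := integral_sub hGi hi3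
  have e2 := integral_add ((hi2.const_mul (-lam)).add
    (hi1.const_mul (μ + (2 * (n + 1) / lam + 4) * ε))) hi4
  have e3 := integral_add (hi2.const_mul (-lam))
    (hi1.const_mul (μ + (2 * (n + 1) / lam + 4) * ε))
  have e4 : ∫ x, (Dset Ω₀ R).indicator
      (fun x => A * (A / μ) ^ k * f x ^ 2 + 2 * ε * δ ^ 2) x =
      A * (A / μ) ^ k * (∫ x in Dset Ω₀ R, f x ^ 2)
        + 2 * ε * δ ^ 2 * volume.real (Dset Ω₀ R) := by
    rw [integral_indicator (Dset_measurable hΩ₀ R), integral_add (hf2.const_mul _) hcst,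
      integral_const_mul, setIntegral_const, smul_eq_mul, mul_comm (volume.real _)]
  simp only [Pi.add_apply, Pi.sub_apply] at hmono e1 e2 e3
  rw [e1, e2, e3, e4, hz, integral_const_mul, integral_const_mul, sub_zero] at hmono
  refine hmono.trans ?_
  gcongr
  set I1 := ∫ x, trunc Ω₀ δ f x ^ 2 * rho R (x 0) ^ (2 * k + 2) with hI1
  set I2 := ∫ x, (∑ i, pd i (trunc Ω₀ δ f) x ^ 2) * rho R (x 0) ^ (2 * k + 2) with hI2
  have hI10 : 0 ≤ I1 := integral_nonneg fun x =>
    mul_nonneg (sq_nonneg _) (pow_nonneg (rho_nonneg _ _) _)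
  have h1 : lam / CP * I1 ≤ lam * I2 := by
    calc lam / CP * I1 ≤ lam / CP * (CP * I2) := by gcongr
      _ = lam * I2 := by field_simp
  have h2 : (2 * (n + 1) / lam + 4) * ε * I1 ≤ lam / (2 * CP) * I1 := by gcongr
  have h3 : lam / CP * I1 = 4 * μ * I1 := by rw [hμ]; field_simp
  have h4 : lam / (2 * CP) * I1 = 2 * μ * I1 := by rw [hμ]; field_simp; ring
  linarith

end SliceEnergy

/-! ### Evolution of the truncated energy -/

section Evolution

variable {n : ℕ} {Ω₀ : Set (Fin n → ℝ)}
  {a : (Fin (n + 1) → ℝ) → Fin (n + 1) → Fin (n + 1) → ℝ}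
  {b : (Fin (n + 1) → ℝ) → Fin (n + 1) → ℝ} {c : (Fin (n + 1) → ℝ) → ℝ}
  {u : ℝ → (Fin (n + 1) → ℝ) → ℝ}

/-- The weighted energy of the truncation of `u` at time `t`. -/
def energy (Ω₀ : Set (Fin n → ℝ)) (δ : ℝ) (k : ℕ) (R : ℝ) (u : ℝ → (Fin (n + 1) → ℝ) → ℝ)
    (t : ℝ) : ℝ :=
  ∫ x, trunc Ω₀ δ (u t) x ^ 2 * rho R (x 0) ^ (2 * k + 2)

lemma IsAncientSolution.cont_slice (hu : IsAncientSolution Ω₀ a b c u) {t : ℝ} (ht : t ≤ 0) :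
    ContinuousOn (u t) (closure (strip Ω₀)) :=
  hu.cont.comp (f := fun x => (t, x)) (by fun_prop) fun _ hx => ⟨ht, hx⟩

lemma IsAncientSolution.cont_time (hu : IsAncientSolution Ω₀ a b c u) {x : Fin (n + 1) → ℝ}
    (hx : x ∈ strip Ω₀) : ContinuousOn (fun t => u t x) (Iic 0) :=
  hu.cont.comp (f := fun t => (t, x)) (by fun_prop) fun _ ht => ⟨ht, subset_closure hx⟩

lemma IsAncientSolution.bdd (hu : IsAncientSolution Ω₀ a b c u) (hb : Bornology.IsBounded Ω₀)
    (T R : ℝ) : ∃ U, 0 ≤ U ∧ ∀ t ∈ Icc T 0, ∀ x ∈ closure (strip Ω₀), |x 0| ≤ R → |u t x| ≤ U := by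
  have hK : IsCompact (Icc T 0 ×ˢ
      {x : Fin (n + 1) → ℝ | |x 0| ≤ R ∧ x ∈ closure (strip Ω₀)}) :=
    isCompact_Icc.prod (isCompact_slab hb R)
  obtain ⟨U, hU⟩ := hK.exists_bound_of_continuousOn
    (hu.cont.mono (prod_mono (fun t ht => ht.2) fun x hx => hx.2))
  exact ⟨|U|, abs_nonneg _, fun t ht x hx hxR => (hU (t, x) ⟨ht, hxR, hx⟩).trans (le_abs_self U)⟩

lemma density_measurable (hΩ₀ : IsOpen Ω₀) {δ : ℝ} (hδ : 0 < δ)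
    (hu : IsAncientSolution Ω₀ a b c u) (k : ℕ) (R : ℝ) {t : ℝ} (ht : t ≤ 0) :
    Continuous fun x => trunc Ω₀ δ (u t) x ^ 2 * rho R (x 0) ^ (2 * k + 2) :=
  ((trunc_contDiff hΩ₀ hδ (hu.cont_slice ht) (hu.space_reg t ht) (hu.bdry t ht)).continuous.pow
    2).mul (((rho_continuous R).pow _).comp (continuous_apply 0))

lemma density_le {δ R : ℝ} (hδ : 0 < δ) (hR : 0 < R) (k : ℕ) (f : (Fin (n + 1) → ℝ) → ℝ)
    (x : Fin (n + 1) → ℝ) :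
    trunc Ω₀ δ f x ^ 2 * rho R (x 0) ^ (2 * k + 2) ≤
      (Dset Ω₀ R).indicator (fun x => f x ^ 2) x := by
  by_cases hx : x ∈ Dset Ω₀ R
  · rw [indicator_of_mem hx, trunc, indicator_of_mem (show x ∈ strip Ω₀ from hx.2)]
    calc _ ≤ Tf δ (f x) ^ 2 * 1 := by
          gcongr
          exact pow_le_one₀ (rho_nonneg _ _) (rho_le_one _ _)
      _ ≤ _ := by rw [mul_one]; exact Tf_sq_le hδ _
  · rw [indicator_of_notMem hx]
    by_cases hxΩ : x ∈ strip Ω₀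
    · have : R ≤ |x 0| := by
        by_contra h
        exact hx (mem_Dset_iff.2 ⟨not_le.1 h, hxΩ⟩)
      rw [rho_eq_zero hR this]
      simp
    · rw [trunc, indicator_of_notMem hxΩ]
      simp

lemma density_nonneg {δ R : ℝ} (k : ℕ) (f : (Fin (n + 1) → ℝ) → ℝ) (x : Fin (n + 1) → ℝ) :
    0 ≤ trunc Ω₀ δ f x ^ 2 * rho R (x 0) ^ (2 * k + 2) :=
  mul_nonneg (sq_nonneg _) (pow_nonneg (rho_nonneg _ _) _)

lemma sq_integrable (hΩ₀ : IsOpen Ω₀) (hb : Bornology.IsBounded Ω₀)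
    (hu : IsAncientSolution Ω₀ a b c u) (R : ℝ) {t : ℝ} (ht : t ≤ 0) :
    Integrable ((Dset Ω₀ R).indicator fun x => u t x ^ 2) :=
  (integrable_indicator_iff (Dset_measurable hΩ₀ R)).2
    (integrableOn_Dset hb ((hu.cont_slice ht).pow 2) R)

lemma density_integrable (hΩ₀ : IsOpen Ω₀) (hb : Bornology.IsBounded Ω₀) {δ R : ℝ} (hδ : 0 < δ)
    (hR : 0 < R) (hu : IsAncientSolution Ω₀ a b c u) (k : ℕ) {t : ℝ} (ht : t ≤ 0) :
    Integrable fun x => trunc Ω₀ δ (u t) x ^ 2 * rho R (x 0) ^ (2 * k + 2) := by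
  refine (sq_integrable hΩ₀ hb hu R ht).mono'
    (density_measurable hΩ₀ hδ hu k R ht).aestronglyMeasurable (Eventually.of_forall fun x => ?_)
  rw [Real.norm_of_nonneg (density_nonneg k _ x)]
  exact density_le hδ hR k _ x

lemma energy_le (hΩ₀ : IsOpen Ω₀) (hb : Bornology.IsBounded Ω₀) {δ R : ℝ} (hδ : 0 < δ)
    (hR : 0 < R) (hu : IsAncientSolution Ω₀ a b c u) (k : ℕ) {t : ℝ} (ht : t ≤ 0) :
    energy Ω₀ δ k R u t ≤ ∫ x in Dset Ω₀ R, u t x ^ 2 := by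
  rw [← integral_indicator (Dset_measurable hΩ₀ R)]
  exact integral_mono (density_integrable hΩ₀ hb hδ hR hu k ht) (sq_integrable hΩ₀ hb hu R ht)
    (density_le hδ hR k _)

lemma sq_integral_continuousOn (hΩ₀ : IsOpen Ω₀) (hb : Bornology.IsBounded Ω₀)
    (hu : IsAncientSolution Ω₀ a b c u) (T R : ℝ) :
    ContinuousOn (fun t => ∫ x in Dset Ω₀ R, u t x ^ 2) (Icc T 0) := by
  obtain ⟨U, hU0, hU⟩ := hu.bdd hb T R
  refine continuousOn_of_dominated (bound := fun _ => U ^ 2)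
    (fun t ht => (integrableOn_Dset hb ((hu.cont_slice ht.2).pow 2) R).aestronglyMeasurable)
    (fun t ht => ?_) (integrableOn_const (Dset_volume_ne_top hb R)) ?_
  · filter_upwards [ae_restrict_mem (Dset_measurable hΩ₀ R)] with x hx
    rw [norm_pow, Real.norm_eq_abs]
    exact pow_le_pow_left₀ (abs_nonneg _)
      (hU t ht x (subset_closure hx.2) (mem_Dset_iff.1 hx).1.le) 2
  · filter_upwards [ae_restrict_mem (Dset_measurable hΩ₀ R)] with x hx
    exact ((hu.cont_time hx.2).mono fun t ht => ht.2).pow 2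

lemma energy_continuousOn (hΩ₀ : IsOpen Ω₀) (hb : Bornology.IsBounded Ω₀) {δ R : ℝ} (hδ : 0 < δ)
    (hR : 0 < R) (hu : IsAncientSolution Ω₀ a b c u) (k : ℕ) (T : ℝ) :
    ContinuousOn (energy Ω₀ δ k R u) (Icc T 0) := by
  obtain ⟨U, hU0, hU⟩ := hu.bdd hb T R
  refine continuousOn_of_dominated (bound := (Dset Ω₀ R).indicator fun _ => U ^ 2)
    (fun t ht => (density_measurable hΩ₀ hδ hu k R ht.2).aestronglyMeasurable)
    (fun t ht => Eventually.of_forall fun x => ?_)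
    ((integrable_indicator_iff (Dset_measurable hΩ₀ R)).2
      (integrableOn_const (Dset_volume_ne_top hb R))) (Eventually.of_forall fun x => ?_)
  · rw [Real.norm_of_nonneg (density_nonneg k _ x)]
    refine (density_le hδ hR k _ x).trans (indicator_le_indicator' fun hx => ?_)
    rw [← sq_abs]
    exact pow_le_pow_left₀ (abs_nonneg _)
      (hU t ht x (subset_closure hx.2) (mem_Dset_iff.1 hx).1.le) 2
  · by_cases hx : x ∈ strip Ω₀
    · simp only [trunc, indicator_of_mem hx]
      exact (((Tf_continuous hδ).comp_continuousOn
        ((hu.cont_time hx).mono fun t ht => ht.2)).pow 2).mul continuousOn_const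
    · simp only [trunc, indicator_of_notMem hx]
      exact continuousOn_const

end Evolution

section RightDerivative

variable {n : ℕ} {Ω₀ : Set (Fin n → ℝ)}
  {a : (Fin (n + 1) → ℝ) → Fin (n + 1) → Fin (n + 1) → ℝ}
  {b : (Fin (n + 1) → ℝ) → Fin (n + 1) → ℝ} {c : (Fin (n + 1) → ℝ) → ℝ}
  {u : ℝ → (Fin (n + 1) → ℝ) → ℝ}

/-- Within `|x₀| ≤ R`, the points where `u > δ` at some time in `[t₀, 0]` lie in a compact subset
of the strip. -/
lemma exists_compact_superlevel (hΩ₀ : IsOpen Ω₀) (hb : Bornology.IsBounded Ω₀)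
    (hu : IsAncientSolution Ω₀ a b c u) {δ : ℝ} (hδ : 0 < δ) (t₀ R : ℝ) :
    ∃ K : Set (Fin (n + 1) → ℝ), IsCompact K ∧ K ⊆ strip Ω₀ ∧
      (∀ x ∈ K, |x 0| ≤ R) ∧
      ∀ x ∈ strip Ω₀, |x 0| ≤ R → x ∉ K → ∀ t ∈ Icc t₀ 0, u t x ≤ δ := by
  set S := Icc t₀ 0 ×ˢ {x : Fin (n + 1) → ℝ | |x 0| ≤ R ∧ x ∈ closure (strip Ω₀)} with hS
  have hSc : IsCompact S := isCompact_Icc.prod (isCompact_slab hb R)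
  have hcont : ContinuousOn (fun p : ℝ × (Fin (n + 1) → ℝ) => u p.1 p.2) S :=
    hu.cont.mono (prod_mono (fun t ht => ht.2) fun x hx => hx.2)
  have hcl : IsClosed (S ∩ (fun p : ℝ × (Fin (n + 1) → ℝ) => u p.1 p.2) ⁻¹' Ici δ) :=
    hcont.preimage_isClosed_of_isClosed hSc.isClosed isClosed_Ici
  have hKc := (hSc.of_isClosed_subset hcl inter_subset_left).image continuous_snd
  refine ⟨_, hKc, ?_, ?_, ?_⟩
  · rintro _ ⟨⟨t, x⟩, ⟨⟨ht, hx⟩, hux⟩, rfl⟩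
    by_contra h
    have : x ∈ frontier (strip Ω₀) := by
      rw [(strip_isOpen hΩ₀).frontier_eq]; exact ⟨hx.2, h⟩
    have h0 := hu.bdry t ht.2 x this
    have h1 : δ ≤ u t x := hux
    linarith
  · rintro _ ⟨⟨t, x⟩, ⟨⟨ht, hx⟩, hux⟩, rfl⟩
    exact hx.1
  · intro x hx hxR hxK t ht
    by_contra h
    exact hxK ⟨(t, x), ⟨⟨ht, hxR, subset_closure hx⟩, (not_le.1 h).le⟩, rfl⟩

/-- The energy may be differentiated from the right under the integral sign: by
`forward_bound_abs` the forward difference quotients of its density are dominated. -/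
lemma energy_hasDerivWithinAt (hΩ₀ : IsOpen Ω₀) (hb : Bornology.IsBounded Ω₀) {δ R lam Lam : ℝ}
    (hδ : 0 < δ) (hR : 0 < R) (hlam : 0 < lam) (hG : GoodCoeffs Ω₀ lam Lam a b c)
    (hu : IsAncientSolution Ω₀ a b c u) (k : ℕ) {t₀ : ℝ} (ht₀ : t₀ < 0) :
    Integrable ((strip Ω₀).indicator fun x => 2 * (Tf δ (u t₀ x) * tauf δ (u t₀ x)) *
      rho R (x 0) ^ (2 * k + 2) * Lop a b c (u t₀) x) ∧
    HasDerivWithinAt (energy Ω₀ δ k R u)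
      (∫ x, (strip Ω₀).indicator (fun x => 2 * (Tf δ (u t₀ x) * tauf δ (u t₀ x)) *
        rho R (x 0) ^ (2 * k + 2) * Lop a b c (u t₀) x) x) (Ici t₀) t₀ := by
  obtain ⟨U, hU0, hU⟩ := hu.bdd hb t₀ R
  obtain ⟨K, hK, hKΩ, hKR, hKu⟩ := exists_compact_superlevel hΩ₀ hb hu hδ t₀ R
  obtain ⟨M, hM0, hM⟩ := forward_bound_abs hΩ₀ hlam hG hu ht₀.le hK hKΩ
  set G := (strip Ω₀).indicator fun x => 2 * (Tf δ (u t₀ x) * tauf δ (u t₀ x)) *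
    rho R (x 0) ^ (2 * k + 2) * Lop a b c (u t₀) x with hGdef
  set Φ : ℝ → (Fin (n + 1) → ℝ) → ℝ := fun t x =>
    trunc Ω₀ δ (u t) x ^ 2 * rho R (x 0) ^ (2 * k + 2) with hΦ
  have ht₀I : t₀ ∈ Icc t₀ 0 := ⟨le_rfl, ht₀.le⟩
  have hev : ∀ᶠ t in nhdsWithin t₀ (Ioi t₀), t ∈ Ioc t₀ 0 := by
    filter_upwards [Ioo_mem_nhdsGT ht₀] with t ht using ⟨ht.1, ht.2.le⟩
  have hlim : ∀ x, Tendsto (fun t => slope (fun t => Φ t x) t₀ t) (nhdsWithin t₀ (Ioi t₀))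
      (nhds (G x)) := by
    intro x
    by_cases hx : x ∈ strip Ω₀
    · have h1 : HasDerivAt (fun t => u t x) (Lop a b c (u t₀) x) t₀ :=
        (hu.pde t₀ ht₀.le x hx).hasDerivAt (Iic_mem_nhds ht₀)
      have h2 := (((Tf_hasDerivAt hδ (u t₀ x)).comp t₀ h1).fun_pow 2).mul_const
        (rho R (x 0) ^ (2 * k + 2))
      have h3 : HasDerivAt (fun t => Φ t x) (G x) t₀ := by
        simp only [hΦ, hGdef, trunc, indicator_of_mem hx]
        refine h2.congr_deriv ?_
        simp only [Function.comp]
        ring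
      exact h3.tendsto_slope.mono_left (nhdsWithin_mono _ fun t ht => ne_of_gt ht)
    · simp only [hΦ, hGdef, trunc, indicator_of_notMem hx]
      simp [slope_fun_def]
  have hbound : ∀ t ∈ Ioc t₀ 0, ∀ x, ‖slope (fun t => Φ t x) t₀ t‖ ≤
      K.indicator (fun _ => 2 * U * M) x := by
    intro t ht x
    have htI : t ∈ Icc t₀ 0 := ⟨ht.1.le, ht.2⟩
    have htp : 0 < t - t₀ := sub_pos.2 ht.1
    by_cases hxK : x ∈ K
    · rw [indicator_of_mem hxK]
      have hx := hKΩ hxK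
      have hxc := subset_closure hx
      rw [slope_def_field, norm_div, Real.norm_eq_abs, Real.norm_eq_abs, abs_of_pos htp,
        div_le_iff₀ htp]
      simp only [hΦ, trunc, indicator_of_mem hx]
      set p := Tf δ (u t x)
      set q := Tf δ (u t₀ x)
      have hp : |p| ≤ U := by
        rw [abs_of_nonneg (Tf_nonneg hδ _)]
        exact (Tf_le_abs hδ _).trans (hU t htI x hxc (hKR x hxK))
      have hq : |q| ≤ U := by
        rw [abs_of_nonneg (Tf_nonneg hδ _)]
        exact (Tf_le_abs hδ _).trans (hU t₀ ht₀I x hxc (hKR x hxK))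
      have hpq : |p - q| ≤ M * (t - t₀) := (Tf_lipschitz hδ _ _).trans (hM t htI x hxK)
      have hw1 : |rho R (x 0) ^ (2 * k + 2)| ≤ 1 := by
        rw [abs_of_nonneg (pow_nonneg (rho_nonneg _ _) _)]
        exact pow_le_one₀ (rho_nonneg _ _) (rho_le_one _ _)
      calc |p ^ 2 * rho R (x 0) ^ (2 * k + 2) - q ^ 2 * rho R (x 0) ^ (2 * k + 2)|
          = |p + q| * |p - q| * |rho R (x 0) ^ (2 * k + 2)| := by
            rw [← abs_mul, ← abs_mul]; congr 1; ring
        _ ≤ (2 * U) * (M * (t - t₀)) * 1 := by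
            gcongr
            exact (abs_add_le p q).trans (by linarith)
        _ = _ := by ring
    · rw [indicator_of_notMem hxK]
      have hz : ∀ s ∈ Icc t₀ 0, Φ s x = 0 := by
        intro s hs
        simp only [hΦ]
        by_cases hx : x ∈ strip Ω₀
        · by_cases hxR : |x 0| ≤ R
          · rw [trunc, indicator_of_mem hx, Tf_eq_zero hδ (hKu x hx hxR hxK s hs)]
            simp
          · rw [rho_eq_zero hR (not_le.1 hxR).le]
            simp
        · rw [trunc, indicator_of_notMem hx]
          simp
      rw [slope_def_field, hz t htI, hz t₀ ht₀I]
      simp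
  have hmeas : ∀ t ∈ Ioc t₀ 0, AEStronglyMeasurable (fun x => slope (fun t => Φ t x) t₀ t)
      volume := by
    intro t ht
    simp only [slope_def_field]
    exact (((density_measurable hΩ₀ hδ hu k R ht.2).sub
      (density_measurable hΩ₀ hδ hu k R ht₀.le)).div_const _).aestronglyMeasurable
  have hbi : Integrable (K.indicator fun _ : Fin (n + 1) → ℝ => 2 * U * M) :=
    (integrable_indicator_iff hK.measurableSet).2 (integrableOn_const hK.measure_lt_top.ne)
  have hGi : Integrable G := by
    obtain ⟨ts, hts, hts'⟩ : ∃ ts : ℕ → ℝ, (∀ m, ts m ∈ Ioc t₀ 0) ∧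
        Tendsto ts atTop (nhdsWithin t₀ (Ioi t₀)) := by
      obtain ⟨ts, hts⟩ := exists_seq_tendsto (nhdsWithin t₀ (Ioi t₀))
      obtain ⟨N, hN⟩ := eventually_atTop.1 (hts.eventually hev)
      exact ⟨fun m => ts (m + N), fun m => hN _ (by lia), hts.comp (tendsto_add_atTop_nat N)⟩
    refine hbi.mono' (aestronglyMeasurable_of_tendsto_ae atTop (fun m => hmeas _ (hts m))
      (Eventually.of_forall fun x => (hlim x).comp hts')) (Eventually.of_forall fun x => ?_)
    exact le_of_tendsto (hlim x).norm (hev.mono fun t ht => hbound t ht x)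
  refine ⟨hGi, ?_⟩
  rw [hasDerivWithinAt_iff_tendsto_slope, Ici_sdiff_left]
  have hconv := tendsto_integral_filter_of_dominated_convergence _
    (hev.mono hmeas) (hev.mono fun t ht => Eventually.of_forall (hbound t ht)) hbi
    (Eventually.of_forall hlim)
  refine hconv.congr' ?_
  filter_upwards [hev] with t ht
  simp only [slope_def_field]
  rw [integral_div, integral_sub (density_integrable hΩ₀ hb hδ hR hu k ht.2)
    (density_integrable hΩ₀ hb hδ hR hu k ht₀.le)]
  rfl

end RightDerivative

section EnergyBound

variable {n : ℕ} {Ω₀ : Set (Fin n → ℝ)}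
  {a : (Fin (n + 1) → ℝ) → Fin (n + 1) → Fin (n + 1) → ℝ}
  {b : (Fin (n + 1) → ℝ) → Fin (n + 1) → ℝ} {c : (Fin (n + 1) → ℝ) → ℝ}
  {u : ℝ → (Fin (n + 1) → ℝ) → ℝ}

lemma integral_Qset (hb : Bornology.IsBounded Ω₀)
    (hu : IsAncientSolution Ω₀ a b c u) (R : ℝ) :
    ∫ p in Qset Ω₀ R, u p.1 p.2 ^ 2 = ∫ t in (-R ^ 2)..0, ∫ x in Dset Ω₀ R, u t x ^ 2 := by
  have hR : -R ^ 2 ≤ 0 := by have := sq_nonneg R; linarith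
  have hi : IntegrableOn (fun p : ℝ × (Fin (n + 1) → ℝ) => u p.1 p.2 ^ 2)
      (Ioc (-R ^ 2) 0 ×ˢ Dset Ω₀ R) (volume.prod volume) := by
    have hK : IsCompact (Icc (-R ^ 2) 0 ×ˢ
        {x : Fin (n + 1) → ℝ | |x 0| ≤ R ∧ x ∈ closure (strip Ω₀)}) :=
      isCompact_Icc.prod (isCompact_slab hb R)
    have hc : ContinuousOn (fun p : ℝ × (Fin (n + 1) → ℝ) => u p.1 p.2 ^ 2) _ :=
      (hu.cont.mono (prod_mono (fun t ht => ht.2) fun x hx => hx.2 :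
        Icc (-R ^ 2) 0 ×ˢ {x : Fin (n + 1) → ℝ | |x 0| ≤ R ∧ x ∈ closure (strip Ω₀)} ⊆ _)).pow 2
    exact (hc.integrableOn_compact hK).mono_set
      (prod_mono Ioc_subset_Icc_self (Dset_subset_slab R))
  rw [intervalIntegral.integral_of_le hR, Qset, Measure.volume_eq_prod]
  exact setIntegral_prod _ hi

/-- Grönwall's argument for `E' ≤ -μ E + …` on `[-R², 0]`. Multiplying `E` by
`exp (μ t) - exp (-μ R²)`, which vanishes at the initial time, removes the initial value of `E`
in favour of the space-time integral of `u²`. -/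
lemma energy_bound (hΩ₀ : IsOpen Ω₀) (hbd : Bornology.IsBounded Ω₀) {δ lam Lam ε R CP : ℝ}
    (hδ : 0 < δ) (hlam : 0 < lam) (hLam : 0 < Lam) (hε : 0 < ε) (hR : 0 < R) (hCP : 0 < CP)
    (hC : ∀ f : (Fin n → ℝ) → ℝ, ContDiff ℝ 1 f → (∀ y ∉ Ω₀, f y = 0) →
      ∫ y, f y ^ 2 ≤ CP * ∫ y, ∑ i, (fderiv ℝ f y (Pi.single i 1)) ^ 2)
    (hεle : (2 * (n + 1) / lam + 4) * ε ≤ lam / (2 * CP))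
    (hG : GoodCoeffs Ω₀ lam Lam a b c) (hS : Smallness Ω₀ b c ε)
    (hu : IsAncientSolution Ω₀ a b c u)
    (k : ℕ) {A μ : ℝ} (hA : A = 2 * (n + 1) / lam * Lam ^ 2 * (4 * (k + 1) / R) ^ 2)
    (hμ : μ = lam / (4 * CP)) {t : ℝ} (ht : t ∈ Icc (-R ^ 2) 0) :
    (Real.exp (μ * t) - Real.exp (-μ * R ^ 2)) * energy Ω₀ δ k R u t ≤
      (μ * Real.exp (-μ * R ^ 2) + A * (A / μ) ^ k) * (∫ p in Qset Ω₀ R, u p.1 p.2 ^ 2)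
        + 2 * ε * δ ^ 2 * volume.real (Dset Ω₀ R) * R ^ 2 := by
  have hμ0 : 0 < μ := by rw [hμ]; positivity
  have hA0 : 0 < A := by rw [hA]; positivity
  have hT : -R ^ 2 ≤ 0 := by have := sq_nonneg R; linarith
  set J : ℝ → ℝ := fun t => ∫ x in Dset Ω₀ R, u t x ^ 2 with hJ
  have hJc : ContinuousOn J (Icc (-R ^ 2) 0) := sq_integral_continuousOn hΩ₀ hbd hu _ R
  have hJ0 : ∀ t, 0 ≤ J t := fun t => integral_nonneg fun x => sq_nonneg _
  -- a continuous extension of `J` to the whole line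
  set Je : ℝ → ℝ := IccExtend hT ((Icc (-R ^ 2) 0).domRestrict J) with hJe
  have hJec : Continuous Je := hJc.domRestrict.Icc_extend'
  have hJeq : ∀ s ∈ Icc (-R ^ 2) 0, Je s = J s := fun s hs => IccExtend_of_mem hT _ hs
  have hJe0 : ∀ s, 0 ≤ Je s := fun s => hJ0 _
  set κ := μ * Real.exp (-μ * R ^ 2) + A * (A / μ) ^ k with hκ
  have hκ0 : 0 ≤ κ := by positivity
  set c0 := 2 * ε * δ ^ 2 * volume.real (Dset Ω₀ R) with hc0
  have hc00 : 0 ≤ c0 := by positivity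
  have hder : ∀ s ∈ Ico (-R ^ 2) 0, ∃ e', HasDerivWithinAt (energy Ω₀ δ k R u) e' (Ici s) s ∧
      e' ≤ -μ * energy Ω₀ δ k R u s + (A * (A / μ) ^ k * J s + c0) := by
    intro s hs
    obtain ⟨hi, hd⟩ := energy_hasDerivWithinAt hΩ₀ hbd hδ hR hlam hG hu k hs.2
    exact ⟨_, hd, slice_energy hΩ₀ hbd hδ hlam hLam hε hR hCP hC hεle hG hS
      (hu.cont_slice hs.2.le) (hu.space_reg s hs.2.le) (hu.bdry s hs.2.le) k hA hμ hi⟩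
  choose! e' he' hle using hder
  have hexp : ∀ s, HasDerivAt (fun s => Real.exp (μ * s) - Real.exp (-μ * R ^ 2))
      (μ * Real.exp (μ * s)) s := fun s => by
    have := (((hasDerivAt_id s).const_mul μ).exp).sub_const (Real.exp (-μ * R ^ 2))
    refine this.congr_deriv ?_
    simp only [id]
    ring
  have hBd : ∀ s, HasDerivAt (fun s => κ * (∫ r in (-R ^ 2)..s, Je r) + c0 * (s + R ^ 2))
      (κ * Je s + c0) s := fun s => by
    have h1 : HasDerivAt (fun s => ∫ r in (-R ^ 2)..s, Je r) (Je s) s :=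
      intervalIntegral.integral_hasDerivAt_right (hJec.intervalIntegrable _ _)
        (hJec.stronglyMeasurableAtFilter _ _) hJec.continuousAt
    have h2 := (h1.const_mul κ).fun_add (((hasDerivAt_id s).add_const (R ^ 2)).const_mul c0)
    refine h2.congr_deriv ?_
    ring
  have key := image_le_of_deriv_right_le_deriv_boundary
    (f := fun s => (Real.exp (μ * s) - Real.exp (-μ * R ^ 2)) * energy Ω₀ δ k R u s)
    (f' := fun s => μ * Real.exp (μ * s) * energy Ω₀ δ k R u s +
      (Real.exp (μ * s) - Real.exp (-μ * R ^ 2)) * e' s) (a := -R ^ 2) (b := 0)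
    (B := fun s => κ * (∫ r in (-R ^ 2)..s, Je r) + c0 * (s + R ^ 2))
    (B' := fun s => κ * Je s + c0)
    (ContinuousOn.mul (by fun_prop) (energy_continuousOn hΩ₀ hbd hδ hR hu k _))
    (fun s hs => (hexp s).hasDerivWithinAt.mul (he' s hs))
    (by simp)
    (fun s _ => (hBd s).continuousAt.continuousWithinAt)
    (fun s _ => (hBd s).hasDerivWithinAt)
    (fun s hs => by
      have hsI : s ∈ Icc (-R ^ 2) 0 := ⟨hs.1, hs.2.le⟩
      have hE := energy_le hΩ₀ hbd hδ hR hu k hs.2.le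
      have hh0 : 0 ≤ Real.exp (μ * s) - Real.exp (-μ * R ^ 2) := by
        rw [sub_nonneg, Real.exp_le_exp]
        have := mul_le_mul_of_nonneg_left hs.1 hμ0.le
        linarith
      have hh1 : Real.exp (μ * s) - Real.exp (-μ * R ^ 2) ≤ 1 := by
        have h1 : Real.exp (μ * s) ≤ 1 := Real.exp_le_one_iff.2
          (mul_nonpos_of_nonneg_of_nonpos hμ0.le hs.2.le)
        have h2 := (Real.exp_pos (-μ * R ^ 2)).le
        linarith
      rw [hJeq s hsI]
      set h := Real.exp (μ * s) - Real.exp (-μ * R ^ 2) with hh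
      set E := energy Ω₀ δ k R u s
      have hES : μ * Real.exp (-μ * R ^ 2) * E ≤ μ * Real.exp (-μ * R ^ 2) * J s := by gcongr
      have hX : 0 ≤ A * (A / μ) ^ k * J s + c0 :=
        add_nonneg (mul_nonneg (by positivity) (hJ0 s)) hc00
      have hX1 : h * (A * (A / μ) ^ k * J s + c0) ≤ 1 * (A * (A / μ) ^ k * J s + c0) := by gcongr
      have hX2 : h * e' s ≤ h * (-μ * E + (A * (A / μ) ^ k * J s + c0)) :=
        mul_le_mul_of_nonneg_left (hle s hs) hh0
      have hexps : Real.exp (μ * s) = h + Real.exp (-μ * R ^ 2) := by rw [hh]; ring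
      rw [hexps, hκ]
      linarith)
    ht
  refine key.trans ?_
  have h_integral : ∫ r in (-R ^ 2)..t, Je r ≤ ∫ p in Qset Ω₀ R, u p.1 p.2 ^ 2 := by
    rw [integral_Qset hbd hu R]
    calc ∫ r in (-R ^ 2)..t, Je r ≤ ∫ r in (-R ^ 2)..0, Je r :=
          intervalIntegral.integral_mono_interval le_rfl ht.1 ht.2
            (Eventually.of_forall hJe0) (hJec.intervalIntegrable _ _)
      _ = _ := intervalIntegral.integral_congr fun s hs => hJeq s (by rwa [uIcc_of_le hT] at hs)
  have := ht.2
  gcongr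
  linarith

end EnergyBound

/-! ### Letting `R → ∞` -/

section Conclusion

variable {n : ℕ} {Ω₀ : Set (Fin n → ℝ)}
  {a : (Fin (n + 1) → ℝ) → Fin (n + 1) → Fin (n + 1) → ℝ}
  {b : (Fin (n + 1) → ℝ) → Fin (n + 1) → ℝ} {c : (Fin (n + 1) → ℝ) → ℝ}
  {u : ℝ → (Fin (n + 1) → ℝ) → ℝ}

/-- Where `u` is positive, the truncated energy stays bounded below for all large `R` and all
small `δ`. -/
lemma energy_lower_bound (hΩ₀ : IsOpen Ω₀) (hb : Bornology.IsBounded Ω₀)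
    (hu : IsAncientSolution Ω₀ a b c u) (k : ℕ) {t : ℝ} (ht : t ≤ 0) {x : Fin (n + 1) → ℝ}
    (hx : x ∈ strip Ω₀) (hpos : 0 < u t x) :
    ∃ e₀ > 0, ∃ m > 0, ∃ R₀ : ℝ, ∀ R, R₀ ≤ R → 0 < R → ∀ δ, 0 < δ → δ ≤ m →
      e₀ ≤ energy Ω₀ δ k R u t := by
  set m := u t x / 4 with hm
  have hm0 : 0 < m := by positivity
  have hcont : ContinuousAt (u t) x :=
    ((hu.space_reg t ht).continuousOn).continuousAt ((strip_isOpen hΩ₀).mem_nhds hx)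
  have hev : ∀ᶠ y in nhds x, 3 * m < u t y ∧ y ∈ strip Ω₀ ∧ |y 0| < |x 0| + 1 := by
    refine (hcont.eventually (lt_mem_nhds (by rw [hm]; linarith))).and
      (Filter.Eventually.and (show ∀ᶠ y in nhds x, y ∈ strip Ω₀ from
        (strip_isOpen hΩ₀).mem_nhds hx) ?_)
    exact (continuous_abs.comp (continuous_apply (0 : Fin (n + 1)))).continuousAt.eventually
      (gt_mem_nhds (by simp))
  obtain ⟨r, hr, hball⟩ := Metric.eventually_nhds_iff_ball.1 hev
  have hvtop : volume (Metric.ball x r) ≠ ⊤ := Metric.isBounded_ball.measure_lt_top.ne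
  have hvol : 0 < volume.real (Metric.ball x r) :=
    ENNReal.toReal_pos (Metric.measure_ball_pos volume x hr).ne' hvtop
  refine ⟨volume.real (Metric.ball x r) * (m ^ 2 * (3 / 4) ^ (2 * k + 2)), by positivity, m, hm0,
    2 * (|x 0| + 1), fun R hR hR0 δ hδ hδm => ?_⟩
  have hlow : ∀ y, (Metric.ball x r).indicator (fun _ => m ^ 2 * (3 / 4 : ℝ) ^ (2 * k + 2)) y ≤
      trunc Ω₀ δ (u t) y ^ 2 * rho R (y 0) ^ (2 * k + 2) := by
    intro y
    by_cases hy : y ∈ Metric.ball x r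
    · obtain ⟨h1, h2, h3⟩ := hball y hy
      rw [indicator_of_mem hy, trunc, indicator_of_mem h2]
      have hT : m ≤ Tf δ (u t y) := by
        have := Tf_ge hδ (u t y)
        linarith
      have hrho : 3 / 4 ≤ rho R (y 0) := by
        refine le_max_of_le_left ?_
        have h4 : 2 * |y 0| ≤ R := by linarith
        have h5 : y 0 ^ 2 / R ^ 2 ≤ 1 / 4 := by
          rw [div_le_iff₀ (by positivity), ← sq_abs]
          have := pow_le_pow_left₀ (by positivity) h4 2
          linarith
        linarith
      gcongr
    · rw [indicator_of_notMem hy]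
      exact density_nonneg k _ y
  have h_integral := integral_mono ((integrable_indicator_iff Metric.isOpen_ball.measurableSet).2
    (integrableOn_const hvtop)) (density_integrable hΩ₀ hb hδ hR0 hu k ht) hlow
  rw [integral_indicator Metric.isOpen_ball.measurableSet, setIntegral_const, smul_eq_mul] at h_integral
  exact h_integral

lemma nonpos_of_growth (hΩ₀ : IsOpen Ω₀) (hbd : Bornology.IsBounded Ω₀) {lam Lam ε CP : ℝ}
    (hlam : 0 < lam) (hLam : 0 < Lam) (hε : 0 < ε) (hCP : 0 < CP)
    (hC : ∀ f : (Fin n → ℝ) → ℝ, ContDiff ℝ 1 f → (∀ y ∉ Ω₀, f y = 0) →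
      ∫ y, f y ^ 2 ≤ CP * ∫ y, ∑ i, (fderiv ℝ f y (Pi.single i 1)) ^ 2)
    (hεle : (2 * (n + 1) / lam + 4) * ε ≤ lam / (2 * CP))
    (hG : GoodCoeffs Ω₀ lam Lam a b c) (hS : Smallness Ω₀ b c ε)
    (hu : IsAncientSolution Ω₀ a b c u) {C d : ℝ}
    (hgrow : ∀ R : ℝ, 1 < R → (∫ p in Qset Ω₀ R, u p.1 p.2 ^ 2) ≤ C * R ^ (2 * d))
    {t : ℝ} (ht : t ≤ 0) {x : Fin (n + 1) → ℝ} (hx : x ∈ strip Ω₀) : u t x ≤ 0 := by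
  by_contra hcon
  set k := ⌈d⌉₊ with hk
  have hkd : d < k + 1 := (Nat.le_ceil d).trans_lt (by rw [hk]; linarith)
  obtain ⟨e₀, he₀, m, hm, R₀, hlow⟩ :=
    energy_lower_bound hΩ₀ hbd hu k ht hx (not_le.1 hcon)
  set μ := lam / (4 * CP) with hμ
  have hμ0 : 0 < μ := by positivity
  set a₀ := 2 * (n + 1) / lam * Lam ^ 2 * (4 * (k + 1)) ^ 2 with ha₀
  have hineq : ∀ᶠ R : ℝ in atTop, (Real.exp (μ * t) - Real.exp (-μ * R ^ 2)) * e₀ -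
      (μ * C * (R ^ (2 * d) * Real.exp (-μ * R ^ 2)) +
        a₀ * (a₀ / μ) ^ k * C * R ^ (-(2 * (k + 1 - d))) + R⁻¹) ≤ 0 := by
    filter_upwards [eventually_ge_atTop R₀, eventually_gt_atTop 1,
      eventually_ge_atTop (-t)] with R hR hR1 hRt
    have hR0 : 0 < R := by linarith
    have htI : t ∈ Icc (-R ^ 2) 0 := ⟨by nlinarith, ht⟩
    -- `δ` is chosen so small that its contribution to the bound is at most `1 / R`
    obtain ⟨δ, hδ, hδm, hδR⟩ : ∃ δ, 0 < δ ∧ δ ≤ m ∧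
        2 * ε * δ ^ 2 * volume.real (Dset Ω₀ R) * R ^ 2 ≤ R⁻¹ := by
      have h1 : Tendsto (fun δ : ℝ => 2 * ε * δ ^ 2 * volume.real (Dset Ω₀ R) * R ^ 2)
          (nhdsWithin 0 (Ioi 0)) (nhds 0) := by
        have : Continuous fun δ : ℝ => 2 * ε * δ ^ 2 * volume.real (Dset Ω₀ R) * R ^ 2 := by
          fun_prop
        refine (this.tendsto' 0 0 (by simp)).mono_left nhdsWithin_le_nhds
      obtain ⟨δ, h2, h3⟩ := ((h1.eventually (gt_mem_nhds (inv_pos.2 hR0))).and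
        (Ioo_mem_nhdsGT hm)).exists
      exact ⟨δ, h3.1, h3.2.le, h2.le⟩
    have hE := hlow R hR hR0 δ hδ hδm
    have hB := energy_bound hΩ₀ hbd hδ hlam hLam hε hR0 hCP hC hεle hG hS hu k rfl hμ htI
    have hg := hgrow R hR1
    set A := 2 * (n + 1) / lam * Lam ^ 2 * (4 * (k + 1) / R) ^ 2 with hA
    have hA0 : 0 < A := by positivity
    have hAa : A = a₀ / R ^ 2 := by rw [hA, ha₀]; field_simp
    have hA1 : A * (A / μ) ^ k * (C * R ^ (2 * d)) =
        a₀ * (a₀ / μ) ^ k * C * R ^ (-(2 * (k + 1 - d))) := by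
      have h1 : R ^ (-(2 * (k + 1 - d))) = R ^ (2 * d) / (R ^ 2) ^ (k + 1) := by
        rw [← pow_mul, ← Real.rpow_natCast R (2 * (k + 1)), ← Real.rpow_sub hR0]
        congr 1
        push_cast
        ring
      rw [h1, hAa, div_div, mul_comm (R ^ 2) μ, ← div_div, div_pow]
      field_simp
      ring
    have hh0 : 0 ≤ Real.exp (μ * t) - Real.exp (-μ * R ^ 2) := by
      rw [sub_nonneg, Real.exp_le_exp]
      have := mul_le_mul_of_nonneg_left htI.1 hμ0.le
      linarith
    have h1 := mul_le_mul_of_nonneg_left hE hh0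
    have h2 : (μ * Real.exp (-μ * R ^ 2) + A * (A / μ) ^ k) *
        (∫ p in Qset Ω₀ R, u p.1 p.2 ^ 2) ≤
        (μ * Real.exp (-μ * R ^ 2) + A * (A / μ) ^ k) * (C * R ^ (2 * d)) :=
      mul_le_mul_of_nonneg_left hg (by positivity)
    have h3 : (μ * Real.exp (-μ * R ^ 2) + A * (A / μ) ^ k) * (C * R ^ (2 * d)) =
        μ * C * (R ^ (2 * d) * Real.exp (-μ * R ^ 2)) +
          A * (A / μ) ^ k * (C * R ^ (2 * d)) := by ring
    rw [h3, hA1] at h2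
    linarith
  have hsq : Tendsto (fun R : ℝ => R ^ 2) atTop atTop := tendsto_pow_atTop (by norm_num)
  have l1 : Tendsto (fun R : ℝ => Real.exp (-μ * R ^ 2)) atTop (nhds 0) := by
    refine Real.tendsto_exp_atBot.comp ?_
    exact hsq.const_mul_atTop_of_neg (by linarith)
  have l2 : Tendsto (fun R : ℝ => R ^ (2 * d) * Real.exp (-μ * R ^ 2)) atTop (nhds 0) := by
    refine ((tendsto_rpow_mul_exp_neg_mul_atTop_nhds_zero d μ hμ0).comp hsq).congr' ?_
    filter_upwards [eventually_gt_atTop 0] with R hR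
    simp only [Function.comp]
    rw [← Real.rpow_natCast R 2, ← Real.rpow_mul hR.le]
    norm_num
  have l3 : Tendsto (fun R : ℝ => R ^ (-(2 * (k + 1 - d)))) atTop (nhds 0) :=
    tendsto_rpow_neg_atTop (by linarith)
  have l4 := (((tendsto_const_nhds (x := Real.exp (μ * t))).sub l1).mul_const e₀).sub
    (((l2.const_mul (μ * C)).add (l3.const_mul (a₀ * (a₀ / μ) ^ k * C))).add
      tendsto_inv_atTop_zero)
  have := le_of_tendsto l4 hineq
  have h5 : 0 < Real.exp (μ * t) * e₀ := by positivity
  simp at this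
  linarith

end Conclusion

/-- An ancient solution whose `L²(Q_R)`-norm grows polynomially, `∫_{Q_R} u² ≤ C R^{2d}`,
must vanish identically. -/
theorem polynomial_L2_growth_trivial
    (n : ℕ) (hn : 1 ≤ n) (lam V₀ : ℝ) (hlam : 0 < lam) (hV₀ : 0 < V₀) :
    ∃ ε₀ > (0 : ℝ), ∀ Lam : ℝ, lam < Lam →
    ∀ Ω₀ : Set (Fin n → ℝ), IsOpen Ω₀ → Ω₀.Nonempty →
      Bornology.IsBounded Ω₀ → volume Ω₀ = ENNReal.ofReal V₀ →
    ∀ a b c, GoodCoeffs Ω₀ lam Lam a b c → Smallness Ω₀ b c ε₀ →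
    ∀ u : ℝ → (Fin (n + 1) → ℝ) → ℝ, IsAncientSolution Ω₀ a b c u →
    (∃ C > (0 : ℝ), ∃ d > (0 : ℝ), ∀ R : ℝ, 1 < R →
        (∫ p in Qset Ω₀ R, u p.1 p.2 ^ 2) ≤ C * R ^ (2 * d)) →
    ∀ t ≤ (0 : ℝ), ∀ x ∈ strip Ω₀, u t x = 0 := by
  obtain ⟨CP, hCP, hP⟩ := poincare_slice n hn V₀
  have hK : 0 < 2 * ((n : ℝ) + 1) / lam + 4 := by positivity
  refine ⟨lam / (2 * CP) / (2 * (n + 1) / lam + 4), by positivity, ?_⟩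
  intro Lam hLam Ω₀ hΩ₀ _ hbd hvol a b c hG hS u hu ⟨C, _, d, _, hgrow⟩ t ht x hx
  have hε : 0 < lam / (2 * CP) / (2 * ((n : ℝ) + 1) / lam + 4) := by positivity
  have hεle : (2 * ((n : ℝ) + 1) / lam + 4) *
      (lam / (2 * CP) / (2 * ((n : ℝ) + 1) / lam + 4)) ≤ lam / (2 * CP) :=
    (mul_div_cancel₀ _ hK.ne').le
  have hPΩ := hP Ω₀ hΩ₀ hbd hvol
  refine le_antisymm ?_ ?_
  · exact nonpos_of_growth hΩ₀ hbd hlam (hlam.trans hLam) hε hCP hPΩ hεle hG hS hu hgrow ht hx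
  · have h := nonpos_of_growth hΩ₀ hbd hlam (hlam.trans hLam) hε hCP hPΩ hεle hG hS
      hu.neg (C := C) (d := d) (by simpa using hgrow) ht hx
    simpa using h
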